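/- arXiv:1909.03356 — 6 statements merged into one kernel-verified Lean document; each statement's English description precedes it below -/
import Mathlib

section
/- Let (λ_n)_{n∈ℕ} be a strictly increasing sequence of real numbers with λ_n → ∞, and let (ν_n)_{n∈ℕ} and (ν̃_n)_{n∈ℕ} be real sequences satisfying λ_n < ν_n < λ_{n+1} and λ_n < ν̃_n < λ_{n+1} for all n ∈ ℕ, with ∑_{n∈ℕ}(ν_n − λ_n) < ∞ and ∑_{n∈ℕ}(ν̃_n − λ_n) < ∞. Let A ⊆ ℕ. If ν_n = ν̃_n for every n ∈ ℕ∖A, and R_k(ν) = R_k(ν̃) for every k ∈ A, then ν_n = ν̃_n for every n ∈ ℕ. -/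
/-!
The residues determine the product through its partial fraction expansion, and a product whose
residues all have the same sign is strictly monotone between consecutive poles.

Divide out the factors outside `A`, which are common to `ν` and `ν̃`: this amounts to replacing
`ν` by the sequence `a` equal to `ν` on `A` and to `λ` off `A` (`cut`), for which the interlacing
is only weak, `λ_n ≤ a_n < λ_{n+1}`. The residues of the reduced products agree at every `λ_k`:
off `A` they vanish, and on `A` the common factor that was removed is nonzero
(`cut_weight_eq`).

For a weakly interlacing `a`, the finite products satisfy
`∏_{n<N} (x - a_n)/(x - λ_n) = 1 - ∑_{k<N} w_{k,N}/(x - λ_k)` and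
`∑_{k<N} w_{k,N} = ∑_{n<N} (a_n - λ_n)` (`partial_fractions`). The weights `w_{k,N}` are
nonnegative and increase with `N` to `W_k`, minus the residue, because each new factor
`(λ_k - a_N)/(λ_k - λ_N)` is at least `1`. Hence `∑ W_k ≤ ∑ (a_n - λ_n) < ∞`, and dominated
convergence at a zero `x = a_m` gives `∑ W_k/(a_m - λ_k) = 1` (`hasSum_weight_at_zero`).

Finally `x ↦ ∑ W_k/(x - λ_k)` is strictly decreasing on `(λ_m, λ_{m+1})` when `W_m > 0`, so it takes
the value `1` at most once there (`gap_unique`), which forces `ν_m = ν̃_m` for `m ∈ A`.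
-/


open Filter

/-- The residue `R_k(ν) = (λ_k − ν_k)·∏_{n≠k} (λ_k − ν_n)/(λ_k − λ_n)`. -/
noncomputable def Rres (lam nu : ℕ → ℝ) (k : ℕ) : ℝ :=
  (lam k - nu k) * ∏' n : {n : ℕ // n ≠ k}, (lam k - nu n) / (lam k - lam n)

/-- The `n`-th factor of the product defining the residue at `λ_k`, with the omitted factor `n = k`
replaced by `1`. -/
noncomputable def fac (lam a : ℕ → ℝ) (k n : ℕ) : ℝ :=
  if n = k then 1 else (lam k - a n) / (lam k - lam n)

/-- Minus the residue at `λ_k` of `∏_{n<N} (x - a_n)/(x - λ_n)`; it is `0` when `N ≤ k`, as there is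
then no pole at `λ_k`. -/
noncomputable def finWeight (lam a : ℕ → ℝ) (N k : ℕ) : ℝ :=
  if k < N then (a k - lam k) * ∏ n ∈ Finset.range N, fac lam a k n else 0

/-- Minus the residue at `λ_k` of the infinite product `∏ (x - a_n)/(x - λ_n)`. -/
noncomputable def weight (lam a : ℕ → ℝ) (k : ℕ) : ℝ :=
  (a k - lam k) * ∏' n, fac lam a k n

open Classical in
/-- The sequence equal to `nu` on `A` and to `lam` off `A`. Off `A` the factor
`(x - a_n)/(x - λ_n)` is then `1`, so the corresponding product runs over `A` only. -/
noncomputable def cut (A : Set ℕ) (lam nu : ℕ → ℝ) (n : ℕ) : ℝ :=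
  if n ∈ A then nu n else lam n

section
variable {lam a : ℕ → ℝ}

lemma fac_pos (hmono : StrictMono lam) (ha : ∀ n, lam n ≤ a n ∧ a n < lam (n + 1)) (k n : ℕ) :
    0 < fac lam a k n := by
  unfold fac
  split_ifs with h
  · exact one_pos
  · rcases lt_or_gt_of_ne h with h | h
    · have h1 : lam (n + 1) ≤ lam k := hmono.monotone h
      have h2 := hmono h
      exact div_pos (by linarith [(ha n).2]) (by linarith)
    · have h2 := hmono h
      exact div_pos_of_neg_of_neg (by linarith [(ha n).1]) (by linarith)

lemma one_le_fac (hmono : StrictMono lam) (ha : ∀ n, lam n ≤ a n ∧ a n < lam (n + 1)) {k n : ℕ}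
    (h : k < n) : 1 ≤ fac lam a k n := by
  have h2 := hmono h
  rw [fac, if_neg h.ne', ← neg_div_neg_eq, one_le_div (by linarith)]
  linarith [(ha n).1]

lemma multipliable_fac (htend : Tendsto lam atTop atTop)
    (ha : ∀ n, lam n ≤ a n ∧ a n < lam (n + 1)) (hsum : Summable fun n => a n - lam n) (k : ℕ) :
    Multipliable (fac lam a k) := by
  have hs : Summable fun n => ‖fac lam a k n - 1‖ := by
    refine Summable.of_norm_bounded_eventually_nat hsum ?_
    filter_upwards [htend.eventually_ge_atTop (lam k + 1)] with n hn
    have hk : n ≠ k := by rintro rfl; linarith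
    have h0 : lam k - lam n ≠ 0 := by linarith
    have e : fac lam a k n - 1 = (a n - lam n) / (lam n - lam k) := by
      have h0' : lam n - lam k ≠ 0 := by linarith
      rw [fac, if_neg hk]
      field_simp
      ring
    have h1 := (ha n).1
    rw [norm_norm, e, Real.norm_of_nonneg (div_nonneg (by linarith) (by linarith))]
    exact div_le_self (by linarith) (by linarith)
  simpa using multipliable_one_add_of_summable hs

lemma tendsto_prod_fac (htend : Tendsto lam atTop atTop)
    (ha : ∀ n, lam n ≤ a n ∧ a n < lam (n + 1)) (hsum : Summable fun n => a n - lam n) (k : ℕ) :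
    Tendsto (fun N => ∏ n ∈ Finset.range N, fac lam a k n) atTop (nhds (∏' n, fac lam a k n)) :=
  (multipliable_fac htend ha hsum k).hasProd.tendsto_prod_nat

/-- Past the index `k` the partial products increase, as the new factors are at least `1`. -/
lemma prod_fac_le (hmono : StrictMono lam) (ha : ∀ n, lam n ≤ a n ∧ a n < lam (n + 1)) {k N M : ℕ}
    (hk : k < N) (h : N ≤ M) :
    ∏ n ∈ Finset.range N, fac lam a k n ≤ ∏ n ∈ Finset.range M, fac lam a k n := by
  induction M, h using Nat.le_induction with
  | base => exact le_rfl
  | succ M hM ih =>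
    rw [Finset.prod_range_succ]
    have h0 : 0 ≤ ∏ n ∈ Finset.range M, fac lam a k n :=
      Finset.prod_nonneg fun n _ => (fac_pos hmono ha k n).le
    exact ih.trans (le_mul_of_one_le_right h0 (one_le_fac hmono ha (hk.trans_le hM)))

lemma prod_fac_le_tprod (hmono : StrictMono lam) (htend : Tendsto lam atTop atTop)
    (ha : ∀ n, lam n ≤ a n ∧ a n < lam (n + 1)) (hsum : Summable fun n => a n - lam n) {k N : ℕ}
    (hk : k < N) : ∏ n ∈ Finset.range N, fac lam a k n ≤ ∏' n, fac lam a k n :=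
  ge_of_tendsto (tendsto_prod_fac htend ha hsum k)
    (eventually_atTop.2 ⟨N, fun _ hM => prod_fac_le hmono ha hk hM⟩)

lemma tprod_fac_pos (hmono : StrictMono lam) (htend : Tendsto lam atTop atTop)
    (ha : ∀ n, lam n ≤ a n ∧ a n < lam (n + 1)) (hsum : Summable fun n => a n - lam n) (k : ℕ) :
    0 < ∏' n, fac lam a k n :=
  (Finset.prod_pos fun n _ => fac_pos hmono ha k n).trans_le
    (prod_fac_le_tprod hmono htend ha hsum (Nat.lt_succ_self k))

lemma finWeight_nonneg (hmono : StrictMono lam) (ha : ∀ n, lam n ≤ a n ∧ a n < lam (n + 1))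
    (N k : ℕ) : 0 ≤ finWeight lam a N k := by
  unfold finWeight
  split_ifs
  · exact mul_nonneg (by linarith [(ha k).1])
      (Finset.prod_nonneg fun n _ => (fac_pos hmono ha k n).le)
  · exact le_rfl

lemma weight_nonneg (hmono : StrictMono lam) (htend : Tendsto lam atTop atTop)
    (ha : ∀ n, lam n ≤ a n ∧ a n < lam (n + 1)) (hsum : Summable fun n => a n - lam n) (k : ℕ) :
    0 ≤ weight lam a k :=
  mul_nonneg (by linarith [(ha k).1]) (tprod_fac_pos hmono htend ha hsum k).le

lemma finWeight_le_weight (hmono : StrictMono lam) (htend : Tendsto lam atTop atTop)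
    (ha : ∀ n, lam n ≤ a n ∧ a n < lam (n + 1)) (hsum : Summable fun n => a n - lam n) (N k : ℕ) :
    finWeight lam a N k ≤ weight lam a k := by
  unfold finWeight
  split_ifs with h
  · exact mul_le_mul_of_nonneg_left (prod_fac_le_tprod hmono htend ha hsum h)
      (by linarith [(ha k).1])
  · exact weight_nonneg hmono htend ha hsum k

lemma tendsto_finWeight (htend : Tendsto lam atTop atTop)
    (ha : ∀ n, lam n ≤ a n ∧ a n < lam (n + 1)) (hsum : Summable fun n => a n - lam n) (k : ℕ) :
    Tendsto (fun N => finWeight lam a N k) atTop (nhds (weight lam a k)) := by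
  refine ((tendsto_prod_fac htend ha hsum k).const_mul (a k - lam k)).congr' ?_
  filter_upwards [eventually_gt_atTop k] with N hN
  rw [finWeight, if_pos hN]

/-- Adding the factor with index `N` multiplies the weight at `λ_k`, `k < N`, by the value of that
factor at `λ_k`. -/
lemma finWeight_succ_of_lt (hmono : StrictMono lam) {N k : ℕ} (h : k < N) :
    finWeight lam a (N + 1) k =
      finWeight lam a N k + (a N - lam N) * (finWeight lam a N k / (lam N - lam k)) := by
  have h1 := hmono h
  have h2 : lam N - lam k ≠ 0 := by linarith
  have h3 : lam k - lam N ≠ 0 := by linarith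
  rw [finWeight, if_pos (by omega), finWeight, if_pos h, Finset.prod_range_succ]
  have e : fac lam a k N = 1 + (a N - lam N) / (lam N - lam k) := by
    rw [fac, if_neg h.ne']
    field_simp
    ring
  rw [e]
  ring

lemma finWeight_succ_self (N : ℕ) :
    finWeight lam a (N + 1) N =
      (a N - lam N) * ∏ n ∈ Finset.range N, (lam N - a n) / (lam N - lam n) := by
  rw [finWeight, if_pos (Nat.lt_succ_self N), Finset.prod_range_succ]
  congr 1
  rw [fac, if_pos rfl, mul_one]
  refine Finset.prod_congr rfl fun n hn => ?_
  rw [fac, if_neg (Finset.mem_range.1 hn).ne]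

/-- Partial fraction expansion of the finite product. -/
lemma partial_fractions (hmono : StrictMono lam) (N : ℕ) (x : ℝ) (hx : ∀ n < N, x ≠ lam n) :
    ∏ n ∈ Finset.range N, (x - a n) / (x - lam n) =
      1 - ∑ k ∈ Finset.range N, finWeight lam a N k / (x - lam k) := by
  induction N generalizing x with
  | zero => simp
  | succ N ih =>
    -- The weight at the new pole `λ_N` is the old product at `λ_N`, known from the induction
    -- hypothesis.
    have hN := ih (lam N) fun n hn => (hmono hn).ne'
    rw [Finset.prod_range_succ, ih x fun n hn => hx n (by omega), Finset.sum_range_succ,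
      finWeight_succ_self, hN]
    have hxN : x - lam N ≠ 0 := sub_ne_zero.2 (hx N (by omega))
    have key : ∑ k ∈ Finset.range N, finWeight lam a (N + 1) k / (x - lam k) =
        ∑ k ∈ Finset.range N, finWeight lam a N k / (x - lam k)
        + (a N - lam N) / (x - lam N) *
          (∑ k ∈ Finset.range N, finWeight lam a N k / (lam N - lam k)
            - ∑ k ∈ Finset.range N, finWeight lam a N k / (x - lam k)) := by
      rw [← Finset.sum_sub_distrib, Finset.mul_sum, ← Finset.sum_add_distrib]
      refine Finset.sum_congr rfl fun k hk => ?_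
      have hk' := Finset.mem_range.1 hk
      have h1 : lam N - lam k ≠ 0 := sub_ne_zero.2 (hmono hk').ne'
      have h2 : x - lam k ≠ 0 := sub_ne_zero.2 (hx k (by omega))
      rw [finWeight_succ_of_lt hmono hk']
      field_simp
      ring
    rw [key]
    have e : (x - a N) / (x - lam N) = 1 - (a N - lam N) / (x - lam N) := by
      field_simp
      ring
    rw [e]
    ring

/-- The weights of the finite product add up to `∑ (a_n - λ_n)`. -/
lemma sum_finWeight (hmono : StrictMono lam) (N : ℕ) :
    ∑ k ∈ Finset.range N, finWeight lam a N k = ∑ n ∈ Finset.range N, (a n - lam n) := by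
  induction N with
  | zero => simp
  | succ N ih =>
    have hN := partial_fractions (a := a) hmono N (lam N) fun n hn => (hmono hn).ne'
    rw [Finset.sum_range_succ, Finset.sum_range_succ, finWeight_succ_self, hN, ← ih,
      Finset.sum_congr rfl fun k hk => finWeight_succ_of_lt hmono (Finset.mem_range.1 hk),
      Finset.sum_add_distrib, ← Finset.mul_sum]
    ring

lemma summable_weight (hmono : StrictMono lam) (htend : Tendsto lam atTop atTop)
    (ha : ∀ n, lam n ≤ a n ∧ a n < lam (n + 1)) (hsum : Summable fun n => a n - lam n) :
    Summable (weight lam a) := by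
  refine summable_of_sum_range_le (c := ∑' n, (a n - lam n))
    (weight_nonneg hmono htend ha hsum) fun M => ?_
  -- Fix the first `M` weights and let the length `N` of the finite product tend to infinity.
  refine le_of_tendsto (tendsto_finsetSum (Finset.range M) fun k _ =>
    tendsto_finWeight htend ha hsum k) ?_
  filter_upwards [eventually_ge_atTop M] with N hN
  calc ∑ k ∈ Finset.range M, finWeight lam a N k
      ≤ ∑ k ∈ Finset.range N, finWeight lam a N k :=
        Finset.sum_le_sum_of_subset_of_nonneg (Finset.range_mono hN)
          fun k _ _ => finWeight_nonneg hmono ha N k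
    _ = ∑ n ∈ Finset.range N, (a n - lam n) := sum_finWeight hmono N
    _ ≤ _ := hsum.sum_le_tsum _ fun n _ => by linarith [(ha n).1]

/-- The partial fraction expansion of the infinite product, evaluated at one of its zeros. -/
lemma hasSum_weight_at_zero (hmono : StrictMono lam) (htend : Tendsto lam atTop atTop)
    (ha : ∀ n, lam n ≤ a n ∧ a n < lam (n + 1)) (hsum : Summable fun n => a n - lam n) {m : ℕ}
    (hm : lam m < a m) : HasSum (fun k => weight lam a k / (a m - lam k)) 1 := by
  obtain ⟨δ, hδ, hδ1, hδ2⟩ : ∃ δ, 0 < δ ∧ δ ≤ a m - lam m ∧ δ ≤ lam (m + 1) - a m :=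
    ⟨min (a m - lam m) (lam (m + 1) - a m),
      lt_min (by linarith) (by linarith [(ha m).2]), min_le_left _ _, min_le_right _ _⟩
  have hdist : ∀ k, δ ≤ |a m - lam k| := by
    intro k
    rcases Nat.lt_or_ge m k with h | h
    · have := hmono.monotone (Nat.succ_le_of_lt h)
      rw [Nat.succ_eq_add_one] at this
      exact le_abs.2 (Or.inr (by linarith))
    · have := hmono.monotone h
      exact le_abs.2 (Or.inl (by linarith))
  have hbound : ∀ k w, 0 ≤ w → w ≤ weight lam a k →
      ‖w / (a m - lam k)‖ ≤ weight lam a k / δ := by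
    intro k w h0 h1
    rw [norm_div, Real.norm_of_nonneg h0, Real.norm_eq_abs]
    exact div_le_div₀ (h0.trans h1) h1 hδ (hdist k)
  have hS := (summable_weight hmono htend ha hsum).div_const δ
  have hlim : Tendsto (fun N => ∑' k, finWeight lam a N k / (a m - lam k)) atTop
      (nhds (∑' k, weight lam a k / (a m - lam k))) :=
    tendsto_tsum_of_dominated_convergence hS
      (fun k => (tendsto_finWeight htend ha hsum k).div_const _)
      (Eventually.of_forall fun N k => hbound k _ (finWeight_nonneg hmono ha N k)
        (finWeight_le_weight hmono htend ha hsum N k))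
  have hone : ∀ᶠ N in atTop, ∑' k, finWeight lam a N k / (a m - lam k) = 1 := by
    filter_upwards [eventually_gt_atTop m] with N hN
    have hpf := partial_fractions (a := a) hmono N (a m) fun n _ h => by
      have := hdist n
      rw [h, sub_self, abs_zero] at this
      linarith
    rw [Finset.prod_eq_zero (Finset.mem_range.2 hN) (by rw [sub_self, zero_div])] at hpf
    rw [tsum_eq_sum (s := Finset.range N)]
    · linarith
    · intro k hk
      rw [finWeight, if_neg (by simpa using hk), zero_div]
  have h1 : ∑' k, weight lam a k / (a m - lam k) = 1 :=
    tendsto_nhds_unique hlim (tendsto_const_nhds.congr' (hone.mono fun _ h => h.symm))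
  have hs : Summable fun k => weight lam a k / (a m - lam k) :=
    Summable.of_norm_bounded hS fun k =>
      hbound k _ (weight_nonneg hmono htend ha hsum k) le_rfl
  exact h1 ▸ hs.hasSum

/-- Two points of the gap `(λ_m, λ_{m+1})` at which `∑ W_k/(x - λ_k)` takes the same value cannot be
distinct: each term is decreasing there. -/
lemma gap_unique (hmono : StrictMono lam) {W : ℕ → ℝ} (hW : ∀ k, 0 ≤ W k) {m : ℕ} (hWm : 0 < W m)
    {x y s : ℝ} (hx : lam m < x) (hy : y < lam (m + 1))
    (hsx : HasSum (fun k => W k / (x - lam k)) s) (hsy : HasSum (fun k => W k / (y - lam k)) s) :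
    ¬ x < y := by
  intro hxy
  have hle : (fun k => W k / (y - lam k)) ≤ fun k => W k / (x - lam k) := by
    intro k
    rcases Nat.lt_or_ge m k with h | h
    · have h1 : lam (m + 1) ≤ lam k := hmono.monotone h
      have h2 := div_le_div_of_nonneg_left (hW k) (by linarith : 0 < lam k - y)
        (by linarith : lam k - y ≤ lam k - x)
      have h3 : W k / (x - lam k) = -(W k / (lam k - x)) := by rw [← div_neg, neg_sub]
      have h4 : W k / (y - lam k) = -(W k / (lam k - y)) := by rw [← div_neg, neg_sub]
      simp only [h3, h4]
      linarith
    · have h1 := hmono.monotone h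
      exact div_le_div_of_nonneg_left (hW k) (by linarith) (by linarith)
  exact lt_irrefl s (hasSum_lt hle
    (div_lt_div_of_pos_left hWm (by linarith : 0 < x - lam m) (by linarith)) hsy hsx)

lemma Rres_eq_neg_weight (k : ℕ) : Rres lam a k = -weight lam a k := by
  have h : ∏' n : {n : ℕ // n ≠ k}, (lam k - a n) / (lam k - lam n) = ∏' n, fac lam a k n := by
    refine (tprod_subtype {n : ℕ | n ≠ k} fun n => (lam k - a n) / (lam k - lam n)).trans ?_
    refine tprod_congr fun n => ?_
    by_cases hn : n = k <;> simp [fac, Set.mulIndicator, hn]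
  rw [Rres, weight, h]
  ring

end

lemma cut_interlace {A : Set ℕ} {lam nu : ℕ → ℝ} (hmono : StrictMono lam)
    (h : ∀ n, lam n < nu n ∧ nu n < lam (n + 1)) (n : ℕ) :
    lam n ≤ cut A lam nu n ∧ cut A lam nu n < lam (n + 1) := by
  unfold cut
  split_ifs
  · exact ⟨(h n).1.le, (h n).2⟩
  · exact ⟨le_rfl, hmono (Nat.lt_succ_self n)⟩

lemma cut_summable {A : Set ℕ} {lam nu : ℕ → ℝ} (h : ∀ n, lam n < nu n ∧ nu n < lam (n + 1))
    (hsum : Summable fun n => nu n - lam n) : Summable fun n => cut A lam nu n - lam n := by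
  refine Summable.of_nonneg_of_le (fun n => ?_) (fun n => ?_) hsum <;>
  · unfold cut
    split_ifs <;> linarith [(h n).1]

/-- Removing the common factors outside `A` keeps the equality of the residues on `A`, and makes
both residues vanish off `A`. -/
lemma cut_weight_eq {lam nu nut : ℕ → ℝ} {A : Set ℕ}
    (hmono : StrictMono lam) (htend : Tendsto lam atTop atTop)
    (hintl : ∀ n, lam n < nu n ∧ nu n < lam (n + 1))
    (hintl' : ∀ n, lam n < nut n ∧ nut n < lam (n + 1))
    (hsum : Summable fun n => nu n - lam n)
    (hsum' : Summable fun n => nut n - lam n)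
    (hoff : ∀ n ∉ A, nu n = nut n)
    (hres : ∀ k ∈ A, Rres lam nu k = Rres lam nut k) (k : ℕ) :
    weight lam (cut A lam nu) k = weight lam (cut A lam nut) k := by
  by_cases hk : k ∈ A
  swap
  · simp [weight, cut, hk]
  have hw : ∀ n, lam n ≤ nu n ∧ nu n < lam (n + 1) := fun n => ⟨(hintl n).1.le, (hintl n).2⟩
  have hw' : ∀ n, lam n ≤ nut n ∧ nut n < lam (n + 1) := fun n => ⟨(hintl' n).1.le, (hintl' n).2⟩
  have m1 := multipliable_fac htend hw hsum k
  have m2 := multipliable_fac htend hw' hsum' k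
  have m3 := multipliable_fac htend (cut_interlace (A := A) hmono hintl)
    (cut_summable hintl hsum) k
  have m4 := multipliable_fac htend (cut_interlace (A := A) hmono hintl')
    (cut_summable hintl' hsum') k
  -- Both sides equal the common factor outside `A` times the two products over `A`.
  have hcross : (∏' n, fac lam nu k n) * ∏' n, fac lam (cut A lam nut) k n =
      (∏' n, fac lam nut k n) * ∏' n, fac lam (cut A lam nu) k n := by
    rw [← m1.tprod_mul m4, ← m2.tprod_mul m3]
    refine tprod_congr fun n => ?_
    by_cases hn : n ∈ A
    · simp only [fac, cut, if_pos hn]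
      ring
    · simp only [fac, cut, if_neg hn, hoff n hn]
  have hR := hres k hk
  rw [Rres_eq_neg_weight, Rres_eq_neg_weight, neg_inj] at hR
  unfold weight at hR ⊢
  rw [show cut A lam nu k = nu k from if_pos hk, show cut A lam nut k = nut k from if_pos hk]
  refine mul_left_cancel₀ (tprod_fac_pos hmono htend hw' hsum' k).ne' ?_
  linear_combination (∏' n, fac lam (cut A lam nut) k n) * hR - (nu k - lam k) * hcross

/-- analytic core of Theorem 3.3, Inverse problem I:
one spectrum `λ`, the part of the other spectrum `ν` outside `A`, and the residues
`R_k` for `k ∈ A` determine `ν` uniquely. -/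
theorem inverse_problem_I (lam nu nut : ℕ → ℝ) (A : Set ℕ)
    (hmono : StrictMono lam)
    (htend : Tendsto lam atTop atTop)
    (hintl : ∀ n, lam n < nu n ∧ nu n < lam (n + 1))
    (hintl' : ∀ n, lam n < nut n ∧ nut n < lam (n + 1))
    (hsum : Summable fun n => nu n - lam n)
    (hsum' : Summable fun n => nut n - lam n)
    (hoff : ∀ n ∉ A, nu n = nut n)
    (hres : ∀ k ∈ A, Rres lam nu k = Rres lam nut k) :
    ∀ n, nu n = nut n := by
  intro m
  by_cases hm : m ∈ A
  swap
  · exact hoff m hm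
  have hc := cut_interlace (A := A) hmono hintl
  have hc' := cut_interlace (A := A) hmono hintl'
  have hs := cut_summable (A := A) hintl hsum
  have hs' := cut_summable (A := A) hintl' hsum'
  have e : cut A lam nu m = nu m := if_pos hm
  have e' : cut A lam nut m = nut m := if_pos hm
  have hS := hasSum_weight_at_zero hmono htend hc hs (m := m) (e ▸ (hintl m).1)
  have hS' := hasSum_weight_at_zero hmono htend hc' hs' (m := m) (e' ▸ (hintl' m).1)
  simp only [← cut_weight_eq hmono htend hintl hintl' hsum hsum' hoff hres] at hS'
  rw [e] at hS
  rw [e'] at hS'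
  have hW := weight_nonneg hmono htend hc hs
  have hWm : 0 < weight lam (cut A lam nu) m :=
    mul_pos (by rw [e]; linarith [(hintl m).1]) (tprod_fac_pos hmono htend hc hs m)
  exact le_antisymm
    (not_lt.1 (gap_unique hmono hW hWm (hintl' m).1 (hintl m).2 hS' hS))
    (not_lt.1 (gap_unique hmono hW hWm (hintl m).1 (hintl' m).2 hS hS'))
end

section
/- Let (λ_n)_{n∈ℕ} be a strictly increasing sequence of real numbers with λ_n → ∞, and let (ν_n)_{n∈ℕ} and (ν̃_n)_{n∈ℕ} be real sequences satisfying λ_n < ν_n < λ_{n+1} and λ_n < ν̃_n < λ_{n+1} for all n ∈ ℕ, with ∑_{n∈ℕ}(ν_n − λ_n) < ∞ and ∑_{n∈ℕ}(ν̃_n − λ_n) < ∞. Let A ⊆ ℕ and let m ∈ ℕ∖A. Suppose there is a real constant c > 0 such that R_k(ν) = c·R_k(ν̃) for every k ∈ A∪{m}, and suppose ν_n = ν̃_n for every n ∈ ℕ∖A. Then c = 1 and ν_n = ν̃_n for every n ∈ ℕ. -/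
/-!
Only the part of `ν` on `A` is unknown, so put `d n = ν n - λ n` for `n ∈ A` and `d n = 0`
otherwise, and consider `P(x) = ∏ (1 + d n / (λ n - x)) = ∏_{n ∈ A} (x - ν n) / (x - λ n)`.
The factors with `n ∉ A` are common to `ν` and `ν̃` and do not vanish, so the hypothesis on the
residues says that `d k P(λ k) = c d̃ k P̃(λ k)` for all `k`, where `P(λ k)` is the product without
its `k`-th factor, and that `P(λ m) = c P̃(λ m)`.

The argument rests on the partial fraction expansion `P(x) = 1 + ∑ d k P(λ k) / (λ k - x)`
(`fracProd_eq`). For finite products it is algebra (`partProd_eq`). Interlacing makes the finite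
residues nonnegative and nondecreasing in the number of factors, and their sum is `∑_{k < N} d k`;
hence the limiting residues are summable and dominate the finite ones, and Tannery's theorem
gives the limit.

The two expansions yield `P(x) - 1 = c (P̃(x) - 1)`. Taking `x = λ m` gives `c = 1`; then `P = P̃`,
so the zero `ν n` of `P` is a zero of `P̃`, and interlacing identifies it as `ν̃ n`.
-/

open Filter

/-- The finite product `∏_{n < N} (1 + d n / (λ n - x))`. At `x = λ k` the convention `a / 0 = 0`
turns the `k`-th factor into `1`, so the value there is the product without that factor. -/
noncomputable def partProd (lam d : ℕ → ℝ) (N : ℕ) (x : ℝ) : ℝ :=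
  ∏ n ∈ Finset.range N, (1 + d n / (lam n - x))

/-- The infinite product `∏ (1 + d n / (λ n - x))`, with the same convention at `x = λ k` as
`partProd`. -/
noncomputable def fracProd (lam d : ℕ → ℝ) (x : ℝ) : ℝ :=
  ∏' n, (1 + d n / (lam n - x))

lemma partProd_succ (lam d : ℕ → ℝ) (N : ℕ) (x : ℝ) :
    partProd lam d (N + 1) x = partProd lam d N x * (1 + d N / (lam N - x)) := by
  simp [partProd, Finset.prod_range_succ]

/-- Partial fraction expansion of the finite product. A point `λ k` is allowed as long as it
is not a pole, i.e. `d k = 0`. -/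
lemma partProd_eq (lam d : ℕ → ℝ) (hmono : StrictMono lam) (N : ℕ) (x : ℝ)
    (hx : ∀ k < N, x = lam k → d k = 0) :
    partProd lam d N x =
      1 + ∑ k ∈ Finset.range N, d k * partProd lam d N (lam k) / (lam k - x) := by
  induction N generalizing x with
  | zero => simp [partProd]
  | succ N ih =>
    have h1 := ih x (fun k hk => hx k (by omega))
    have h2 := ih (lam N) (fun k hk h => absurd (hmono.injective h) (by omega))
    have hterm : ∀ k ∈ Finset.range N,
        d k * partProd lam d (N + 1) (lam k) / (lam k - x) =
          d k * partProd lam d N (lam k) / (lam k - x) + d N / (lam N - x) *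
            (d k * partProd lam d N (lam k) / (lam k - x) -
              d k * partProd lam d N (lam k) / (lam k - lam N)) := by
      intro k hk
      have hkN : lam k < lam N := hmono (Finset.mem_range.1 hk)
      rw [partProd_succ]
      by_cases hk0 : d k = 0
      · simp [hk0]
      have hu : lam k - x ≠ 0 := fun h =>
        hk0 (hx k (by have := Finset.mem_range.1 hk; omega) (by linarith))
      by_cases hN0 : d N = 0
      · simp [hN0]
      have hw : lam N - x ≠ 0 := fun h => hN0 (hx N (by omega) (by linarith))
      have hv : lam N - lam k ≠ 0 := by linarith
      have hv' : lam k - lam N ≠ 0 := by linarith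
      field_simp
      ring
    rw [Finset.sum_range_succ, Finset.sum_congr rfl hterm, Finset.sum_add_distrib,
      ← Finset.mul_sum, Finset.sum_sub_distrib, partProd_succ, partProd_succ]
    have e1 := eq_sub_of_add_eq' h1.symm
    have e2 := eq_sub_of_add_eq' h2.symm
    rw [e1, e2]
    simp only [sub_self, div_zero, add_zero]
    ring

/-- The residues of the finite product sum to `∑ d k`, the coefficient of `1 / x` at infinity. -/
lemma sum_partProd (lam d : ℕ → ℝ) (hmono : StrictMono lam) (N : ℕ) :
    ∑ k ∈ Finset.range N, d k * partProd lam d N (lam k) = ∑ k ∈ Finset.range N, d k := by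
  induction N with
  | zero => simp
  | succ N ih =>
    have h2 := partProd_eq lam d hmono N (lam N)
      (fun k hk h => absurd (hmono.injective h) (by omega))
    have hterm : ∀ k ∈ Finset.range N,
        d k * partProd lam d (N + 1) (lam k) =
          d k * partProd lam d N (lam k) -
            d N * (d k * partProd lam d N (lam k) / (lam k - lam N)) := by
      intro k hk
      have hkN : lam k < lam N := hmono (Finset.mem_range.1 hk)
      have hv : lam N - lam k ≠ 0 := by linarith
      have hv' : lam k - lam N ≠ 0 := by linarith
      rw [partProd_succ]
      field_simp
      ring
    rw [Finset.sum_range_succ, Finset.sum_congr rfl hterm, Finset.sum_sub_distrib,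
      ← Finset.mul_sum, ih, partProd_succ, Finset.sum_range_succ, eq_sub_of_add_eq' h2.symm]
    simp only [sub_self, div_zero, add_zero]
    ring

lemma exists_bound_inv (lam : ℕ → ℝ) (htend : Tendsto lam atTop atTop) (x : ℝ) :
    ∃ C, ∀ n, |(lam n - x)⁻¹| ≤ C := by
  have h : Tendsto (fun n => |(lam n - x)⁻¹|) atTop (nhds |0|) :=
    ((tendsto_atTop_add_const_right atTop (-x) htend).inv_tendsto_atTop).abs
  obtain ⟨C, hC⟩ := h.bddAbove_range
  exact ⟨C, fun n => hC ⟨n, rfl⟩⟩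

lemma summable_factor (lam d : ℕ → ℝ) (htend : Tendsto lam atTop atTop)
    (hd0 : ∀ n, 0 ≤ d n) (hsum : Summable d) (x : ℝ) :
    Summable fun n => ‖d n / (lam n - x)‖ := by
  obtain ⟨C, hC⟩ := exists_bound_inv lam htend x
  refine Summable.of_nonneg_of_le (fun _ => norm_nonneg _) (fun n => ?_) (hsum.mul_right C)
  rw [div_eq_mul_inv, Real.norm_eq_abs, abs_mul, abs_of_nonneg (hd0 n)]
  exact mul_le_mul_of_nonneg_left (hC n) (hd0 n)

lemma multipliable_factor (lam d : ℕ → ℝ) (htend : Tendsto lam atTop atTop)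
    (hd0 : ∀ n, 0 ≤ d n) (hsum : Summable d) (x : ℝ) :
    Multipliable fun n => 1 + d n / (lam n - x) :=
  multipliable_one_add_of_summable (summable_factor lam d htend hd0 hsum x)

lemma factor_pos (lam d : ℕ → ℝ) (hmono : StrictMono lam)
    (hd0 : ∀ n, 0 ≤ d n) (hd1 : ∀ n, d n < lam (n + 1) - lam n) (n k : ℕ) :
    0 < 1 + d n / (lam n - lam k) := by
  rcases lt_trichotomy n k with h | h | h
  · have h1 : lam (n + 1) ≤ lam k := hmono.monotone h
    have h2 : 0 < lam k - lam n := sub_pos.2 (hmono h)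
    have h3 : d n / (lam k - lam n) < 1 := by
      rw [div_lt_one h2]
      linarith [hd1 n]
    rw [← neg_sub (lam k), div_neg]
    linarith
  · simp [h]
  · have h2 : 0 < lam n - lam k := sub_pos.2 (hmono h)
    have := div_nonneg (hd0 n) h2.le
    linarith

lemma fracProd_ne_zero (lam d : ℕ → ℝ) (htend : Tendsto lam atTop atTop)
    (hd0 : ∀ n, 0 ≤ d n) (hsum : Summable d) (x : ℝ)
    (h : ∀ n, 1 + d n / (lam n - x) ≠ 0) : fracProd lam d x ≠ 0 :=
  tprod_one_add_ne_zero_of_summable h (summable_factor lam d htend hd0 hsum x)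

lemma partProd_nonneg (lam d : ℕ → ℝ) (hmono : StrictMono lam)
    (hd0 : ∀ n, 0 ≤ d n) (hd1 : ∀ n, d n < lam (n + 1) - lam n) (N k : ℕ) :
    0 ≤ partProd lam d N (lam k) :=
  Finset.prod_nonneg fun n _ => (factor_pos lam d hmono hd0 hd1 n k).le

lemma partProd_tendsto (lam d : ℕ → ℝ) (htend : Tendsto lam atTop atTop)
    (hd0 : ∀ n, 0 ≤ d n) (hsum : Summable d) (x : ℝ) :
    Tendsto (fun N => partProd lam d N x) atTop (nhds (fracProd lam d x)) :=
  (multipliable_factor lam d htend hd0 hsum x).tendsto_prod_tprod_nat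

/-- Every factor at `λ k` with index at least `k` is at least `1`, so the partial products with
`N > k` factors increase to the infinite product. -/
lemma partProd_le (lam d : ℕ → ℝ) (hmono : StrictMono lam) (htend : Tendsto lam atTop atTop)
    (hd0 : ∀ n, 0 ≤ d n) (hd1 : ∀ n, d n < lam (n + 1) - lam n) (hsum : Summable d)
    (N k : ℕ) (hk : k < N) :
    partProd lam d N (lam k) ≤ fracProd lam d (lam k) := by
  have hstep : Monotone fun j => partProd lam d (j + N) (lam k) := by
    refine monotone_nat_of_le_succ fun j => ?_
    rw [show j + 1 + N = (j + N) + 1 by ring, partProd_succ]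
    have hpos : 0 < lam (j + N) - lam k := sub_pos.2 (hmono (by omega))
    have := div_nonneg (hd0 (j + N)) hpos.le
    exact le_mul_of_one_le_right (partProd_nonneg lam d hmono hd0 hd1 _ _) (by linarith)
  have hlim := (tendsto_add_atTop_iff_nat N).2 (partProd_tendsto lam d htend hd0 hsum (lam k))
  simpa using hstep.ge_of_tendsto hlim 0

lemma summable_residue (lam d : ℕ → ℝ) (hmono : StrictMono lam) (htend : Tendsto lam atTop atTop)
    (hd0 : ∀ n, 0 ≤ d n) (hd1 : ∀ n, d n < lam (n + 1) - lam n) (hsum : Summable d) :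
    Summable fun k => d k * fracProd lam d (lam k) := by
  have hP : ∀ k, 0 ≤ fracProd lam d (lam k) := fun k =>
    (partProd_nonneg lam d hmono hd0 hd1 (k + 1) k).trans
      (partProd_le lam d hmono htend hd0 hd1 hsum (k + 1) k (by omega))
  refine summable_of_sum_range_le (c := ∑' n, d n) (fun k => mul_nonneg (hd0 k) (hP k))
    fun M => ?_
  have hlim : Tendsto (fun N => ∑ k ∈ Finset.range M, d k * partProd lam d N (lam k)) atTop
      (nhds (∑ k ∈ Finset.range M, d k * fracProd lam d (lam k))) :=
    tendsto_finsetSum _ fun k _ => (partProd_tendsto lam d htend hd0 hsum _).const_mul _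
  refine le_of_tendsto hlim ?_
  filter_upwards [eventually_ge_atTop M] with N hN
  calc ∑ k ∈ Finset.range M, d k * partProd lam d N (lam k)
      ≤ ∑ k ∈ Finset.range N, d k * partProd lam d N (lam k) :=
        Finset.sum_le_sum_of_subset_of_nonneg (Finset.range_mono hN)
          fun k _ _ => mul_nonneg (hd0 k) (partProd_nonneg lam d hmono hd0 hd1 N k)
    _ = ∑ k ∈ Finset.range N, d k := sum_partProd lam d hmono N
    _ ≤ ∑' n, d n := hsum.sum_le_tsum _ fun n _ => hd0 n

/-- Partial fraction expansion of the infinite product away from its poles. -/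
lemma fracProd_eq (lam d : ℕ → ℝ) (hmono : StrictMono lam) (htend : Tendsto lam atTop atTop)
    (hd0 : ∀ n, 0 ≤ d n) (hd1 : ∀ n, d n < lam (n + 1) - lam n) (hsum : Summable d)
    (x : ℝ) (hx : ∀ k, x = lam k → d k = 0) :
    fracProd lam d x = 1 + ∑' k, d k * fracProd lam d (lam k) / (lam k - x) := by
  obtain ⟨C, hC⟩ := exists_bound_inv lam htend x
  have hT := tendsto_tsum_of_dominated_convergence (𝓕 := atTop)
    (f := fun N k => if k < N then d k * partProd lam d N (lam k) / (lam k - x) else 0)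
    (g := fun k => d k * fracProd lam d (lam k) / (lam k - x))
    ((summable_residue lam d hmono htend hd0 hd1 hsum).mul_right C)
    (fun k => by
      refine Tendsto.congr' ?_
        (((partProd_tendsto lam d htend hd0 hsum (lam k)).const_mul (d k)).div_const (lam k - x))
      filter_upwards [eventually_gt_atTop k] with N hN
      rw [if_pos hN])
    (Eventually.of_forall fun N k => by
      have hC0 : 0 ≤ C := (abs_nonneg _).trans (hC 0)
      have hP := (partProd_nonneg lam d hmono hd0 hd1 (k + 1) k).trans
        (partProd_le lam d hmono htend hd0 hd1 hsum (k + 1) k (by omega))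
      split_ifs with h
      · have hQ := partProd_nonneg lam d hmono hd0 hd1 N k
        rw [div_eq_mul_inv, Real.norm_eq_abs, abs_mul, abs_of_nonneg (mul_nonneg (hd0 k) hQ)]
        exact mul_le_mul (mul_le_mul_of_nonneg_left
          (partProd_le lam d hmono htend hd0 hd1 hsum N k h) (hd0 k)) (hC k) (abs_nonneg _)
          (mul_nonneg (hd0 k) hP)
      · rw [norm_zero]
        exact mul_nonneg (mul_nonneg (hd0 k) hP) hC0)
  refine tendsto_nhds_unique (partProd_tendsto lam d htend hd0 hsum x)
    ((hT.const_add 1).congr fun N => ?_)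
  rw [partProd_eq lam d hmono N x fun k _ => hx k,
    tsum_eq_sum (s := Finset.range N) fun k hk => if_neg (by simpa using hk)]
  congr 1
  exact Finset.sum_congr rfl fun k hk => if_pos (Finset.mem_range.1 hk)

lemma Rres_eq (lam nu : ℕ → ℝ) (hmono : StrictMono lam) (k : ℕ) :
    Rres lam nu k = -((nu k - lam k) * fracProd lam (fun n => nu n - lam n) (lam k)) := by
  have h : ∏' n : {n : ℕ // n ≠ k}, (lam k - nu n) / (lam k - lam n) =
      fracProd lam (fun n => nu n - lam n) (lam k) := by
    unfold fracProd
    rw [← tprod_subtype_eq_of_mulSupport_subset (s := {n : ℕ | n ≠ k})]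
    · refine tprod_congr fun n => ?_
      have hne : lam n - lam k ≠ 0 := sub_ne_zero.2 (hmono.injective.ne n.2)
      have hne' : lam k - lam n ≠ 0 := sub_ne_zero.2 (hmono.injective.ne n.2.symm)
      field_simp
      ring
    · intro n hn h
      exact hn (by simp [h])
  rw [Rres, h]
  ring

/-- Factorization of the product over all indices into the parts on and off `A`. -/
lemma fracProd_split (lam D : ℕ → ℝ) (A : Set ℕ) (htend : Tendsto lam atTop atTop)
    (hD0 : ∀ n, 0 ≤ D n) (hsum : Summable D) (x : ℝ) :
    fracProd lam D x = fracProd lam (A.indicator D) x * fracProd lam (Aᶜ.indicator D) x := by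
  have hind : ∀ B : Set ℕ, ∀ n, 0 ≤ B.indicator D n := fun B n =>
    Set.indicator_nonneg (fun n _ => hD0 n) n
  unfold fracProd
  rw [← (multipliable_factor lam _ htend (hind A) (hsum.indicator A) x).tprod_mul
    (multipliable_factor lam _ htend (hind Aᶜ) (hsum.indicator Aᶜ) x)]
  refine tprod_congr fun n => ?_
  by_cases h : n ∈ A <;> simp [h]

/-- analytic core of Theorem 3.6, Inverse problem III:
the residues on `A ∪ {m}` with `m ∉ A`, known up to a common positive factor `c`, and
the part of `ν` outside `A` determine `ν` and force `c = 1`. -/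
theorem inverse_problem_III (lam nu nut : ℕ → ℝ) (A : Set ℕ) (m : ℕ) (c : ℝ)
    (hmono : StrictMono lam)
    (htend : Tendsto lam atTop atTop)
    (hintl : ∀ n, lam n < nu n ∧ nu n < lam (n + 1))
    (hintl' : ∀ n, lam n < nut n ∧ nut n < lam (n + 1))
    (hsum : Summable fun n => nu n - lam n)
    (hsum' : Summable fun n => nut n - lam n)
    (hmA : m ∉ A)
    (hc : 0 < c)
    (hres : ∀ k ∈ A ∪ {m}, Rres lam nu k = c * Rres lam nut k)
    (hoff : ∀ n ∉ A, nu n = nut n) :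
    c = 1 ∧ ∀ n, nu n = nut n := by
  set D : ℕ → ℝ := fun n => nu n - lam n with hD
  set D' : ℕ → ℝ := fun n => nut n - lam n with hD'
  have hDpos : ∀ n, 0 < D n := fun n => sub_pos.2 (hintl n).1
  have hDpos' : ∀ n, 0 < D' n := fun n => sub_pos.2 (hintl' n).1
  have hD1 : ∀ n, D n < lam (n + 1) - lam n := fun n => by simpa [hD] using (hintl n).2
  have hD1' : ∀ n, D' n < lam (n + 1) - lam n := fun n => by simpa [hD'] using (hintl' n).2
  have hgap : ∀ n, 0 < lam (n + 1) - lam n := fun n => sub_pos.2 (hmono n.lt_succ_self)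
  have ind0 : ∀ (B : Set ℕ) n, 0 ≤ B.indicator D n := fun B n =>
    Set.indicator_nonneg (fun n _ => (hDpos n).le) n
  have ind0' : ∀ (B : Set ℕ) n, 0 ≤ B.indicator D' n := fun B n =>
    Set.indicator_nonneg (fun n _ => (hDpos' n).le) n
  have ind1 : ∀ (B : Set ℕ) n, B.indicator D n < lam (n + 1) - lam n := fun B n =>
    by by_cases h : n ∈ B <;> simp only [h, not_false_eq_true, Set.indicator_of_mem,
      Set.indicator_of_notMem, hD1 n, hgap n]
  have ind1' : ∀ (B : Set ℕ) n, B.indicator D' n < lam (n + 1) - lam n := fun B n =>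
    by by_cases h : n ∈ B <;> simp only [h, not_false_eq_true, Set.indicator_of_mem,
      Set.indicator_of_notMem, hD1' n, hgap n]
  have hcompl : Aᶜ.indicator D' = Aᶜ.indicator D := by
    refine Set.indicator_congr fun n hn => ?_
    simp [hD, hD', hoff n hn]
  -- Cancel the common nonzero product over the complement of `A`.
  have hkey : ∀ k ∈ A ∪ {m}, D k * fracProd lam (A.indicator D) (lam k) =
      c * (D' k * fracProd lam (A.indicator D') (lam k)) := by
    intro k hk
    have h := hres k hk
    rw [Rres_eq lam nu hmono, Rres_eq lam nut hmono,
      fracProd_split lam D A htend (fun n => (hDpos n).le) hsum,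
      fracProd_split lam D' A htend (fun n => (hDpos' n).le) hsum', hcompl] at h
    have hne := fracProd_ne_zero lam (Aᶜ.indicator D) htend (ind0 _) (hsum.indicator _) (lam k)
      fun n => (factor_pos lam _ hmono (ind0 _) (ind1 _) n k).ne'
    refine mul_right_cancel₀ hne ?_
    change -(D k * _) = c * -(D' k * _) at h
    linarith
  have hres' : ∀ k, A.indicator D k * fracProd lam (A.indicator D) (lam k) =
      c * (A.indicator D' k * fracProd lam (A.indicator D') (lam k)) := by
    intro k
    by_cases hk : k ∈ A
    · simpa [hk] using hkey k (Or.inl hk)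
    · simp [hk]
  have hdiff : ∀ x, (∀ k ∈ A, x ≠ lam k) →
      fracProd lam (A.indicator D) x - 1 = c * (fracProd lam (A.indicator D') x - 1) := by
    intro x hx
    rw [fracProd_eq lam _ hmono htend (ind0 A) (ind1 A) (hsum.indicator A) x
        fun k hk => Set.indicator_of_notMem (fun h => hx k h hk) _,
      fracProd_eq lam _ hmono htend (ind0' A) (ind1' A) (hsum'.indicator A) x
        fun k hk => Set.indicator_of_notMem (fun h => hx k h hk) _,
      add_sub_cancel_left, add_sub_cancel_left, ← tsum_mul_left]
    refine tsum_congr fun k => ?_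
    rw [hres' k, mul_div_assoc]
  have hc1 : c = 1 := by
    have h1 := hdiff (lam m) fun k hk h => hmA (hmono.injective h ▸ hk)
    have h2 := hkey m (Or.inr rfl)
    have hDm : D' m = D m := by simp [hD, hD', hoff m hmA]
    rw [hDm] at h2
    have h3 : fracProd lam (A.indicator D) (lam m) =
        c * fracProd lam (A.indicator D') (lam m) :=
      mul_left_cancel₀ (hDpos m).ne' (by linarith)
    linarith
  refine ⟨hc1, fun n => ?_⟩
  by_cases hn : n ∈ A
  swap
  · exact hoff n hn
  have hnl : ∀ k, nu n ≠ lam k := by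
    intro k h
    have h1 : n < k := hmono.lt_iff_lt.1 (h ▸ (hintl n).1)
    have h2 : k < n + 1 := hmono.lt_iff_lt.1 (h ▸ (hintl n).2)
    omega
  have hzero : fracProd lam (A.indicator D) (nu n) = 0 := by
    refine tprod_of_exists_eq_zero ⟨n, ?_⟩
    have : lam n - nu n ≠ 0 := sub_ne_zero.2 (hnl n).symm
    simp only [hn, Set.indicator_of_mem, hD]
    field_simp
    ring
  have hzero' : fracProd lam (A.indicator D') (nu n) = 0 := by
    have := hdiff (nu n) fun k _ => hnl k
    rw [hc1, hzero] at this
    linarith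
  obtain ⟨j, hj⟩ : ∃ j, 1 + A.indicator D' j / (lam j - nu n) = 0 := by
    by_contra! h
    exact fracProd_ne_zero lam _ htend (ind0' A) (hsum'.indicator A) (nu n) h hzero'
  have hjA : j ∈ A := by
    by_contra h
    simp [h] at hj
  have hne : lam j - nu n ≠ 0 := sub_ne_zero.2 (hnl j).symm
  have heq : nu n = nut j := by
    simp only [hjA, Set.indicator_of_mem, hD'] at hj
    field_simp at hj
    linarith
  -- The intervals `(λ i, λ (i + 1))` are disjoint, so the common value forces `j = n`.
  have h1 : n < j + 1 := hmono.lt_iff_lt.1 ((hintl n).1.trans (heq ▸ (hintl' j).2))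
  have h2 : j < n + 1 := hmono.lt_iff_lt.1 ((hintl' j).1.trans (heq ▸ (hintl n).2))
  have : j = n := by omega
  rw [heq, this]
end

section
/- Let (λ_n)_{n∈ℕ} be a sequence of nonzero real numbers with |λ_n| → ∞, and let (ν_n)_{n∈ℕ} and (ν̃_n)_{n∈ℕ} be strictly increasing sequences of nonzero real numbers, each disjoint from {λ_n : n ∈ ℕ}, such that the infinite products 𝒢(z) = ∏_{n∈ℕ}(z/ν_n − 1)·(z/λ_n − 1)^{-1} and 𝒢̃(z) = ∏_{n∈ℕ}(z/ν̃_n − 1)·(z/λ_n − 1)^{-1} converge locally uniformly on ℂ ∖ {λ_n : n ∈ ℕ}. Suppose there exist real numbers L, L̃ and a real sequence (A_n)_{n∈ℕ} such that for all z ∈ ℂ ∖ {λ_n : n ∈ ℕ} the series below converge and 𝒢(z) = L + ∑_{n∈ℕ} A_n/(z − λ_n) and 𝒢̃(z) = L̃ + ∑_{n∈ℕ} A_n/(z − λ_n). If ν_m = ν̃_m for some m ∈ ℕ, then L = L̃ and ν_n = ν̃_n for every n ∈ ℕ. -/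
/-!
Evaluating both representations at the common zero `ν_m` shows `L = L̃`, hence `𝒢 = 𝒢̃` off the
poles. It remains to recover `ν` from `𝒢`, and for this it suffices that the zeros of `𝒢` in
`U = ℂ ∖ {λ_n}` are exactly the `ν_n` (`zero_iff_mem_range`), because a strictly increasing sequence
indexed by `ℕ` is determined by its range.

Each `ν_n` is a zero since the partial products vanish there from some point on. For the converse,
`U` is open and connected, and `𝒢` is holomorphic on `U` with `𝒢(0) = 1`, so its zeros are isolated.
If `z₀` is a zero that is not one of the `ν_n`, then a small disc about `z₀` contains no other zero
of `𝒢`, hence no `ν_n` at all (this also excludes that `z₀` is an accumulation point of the `ν_n`),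
so the partial products have no zero in that disc. By Hurwitz's theorem (`hurwitz_ne_zero`) their
limit cannot vanish exactly at `z₀`.
-/

open Filter Set Topology

/-- Hurwitz's theorem on a disc, in zero-free form: apply the maximum principle to the reciprocals
of the approximating functions. -/
lemma hurwitz_ne_zero {F : ℕ → ℂ → ℂ} {G : ℂ → ℂ} {c : ℂ} {r : ℝ} (hr : 0 < r)
    (hF : ∀ k, DifferentiableOn ℂ (F k) (Metric.closedBall c r))
    (hF0 : ∀ k, ∀ z ∈ Metric.closedBall c r, F k z ≠ 0)
    (hG : ContinuousOn G (Metric.sphere c r))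
    (hG0 : ∀ z ∈ Metric.sphere c r, G z ≠ 0)
    (hlim : TendstoUniformlyOn F G atTop (Metric.closedBall c r)) : G c ≠ 0 := by
  obtain ⟨ε, hε, hGε⟩ : ∃ ε > 0, ∀ z ∈ Metric.sphere c r, ε ≤ ‖G z‖ := by
    obtain ⟨w, hw, hmin⟩ := (isCompact_sphere c r).exists_isMinOn
      (NormedSpace.sphere_nonempty.2 hr.le) hG.norm
    exact ⟨‖G w‖, norm_pos_iff.2 (hG0 w hw), fun z hz => hmin hz⟩
  have hc : c ∈ Metric.closedBall c r := Metric.mem_closedBall_self hr.le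
  have key : ∀ᶠ k in atTop, ε / 2 ≤ ‖F k c‖ := by
    filter_upwards [Metric.tendstoUniformlyOn_iff.1 hlim (ε / 2) (by positivity)] with k hk
    have hd : DiffContOnCl ℂ (fun z => (F k z)⁻¹) (Metric.ball c r) := by
      apply DifferentiableOn.diffContOnCl
      rw [closure_ball c hr.ne']
      exact (hF k).inv (hF0 k)
    have hfr : ∀ z ∈ frontier (Metric.ball c r), ‖(F k z)⁻¹‖ ≤ (ε / 2)⁻¹ := by
      intro z hz
      rw [frontier_ball c hr.ne'] at hz
      have h1 := hk z (Metric.sphere_subset_closedBall hz)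
      have h2 := hGε z hz
      rw [dist_eq_norm] at h1
      have h3 := norm_sub_norm_le (G z) (F k z)
      rw [norm_inv]
      exact inv_anti₀ (by positivity) (by linarith)
    have := Complex.norm_le_of_forall_mem_frontier_norm_le Metric.isBounded_ball hd hfr
      (subset_closure (Metric.mem_ball_self hr))
    rw [norm_inv] at this
    exact (inv_le_inv₀ (norm_pos_iff.2 (hF0 k c hc)) (by positivity)).1 this
  have h := ge_of_tendsto (hlim.tendsto_at hc).norm key
  exact norm_pos_iff.1 (by linarith)

lemma isOpen_poleFree {lam : ℕ → ℝ} (hlamT : Tendsto (fun n => |lam n|) atTop atTop) :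
    IsOpen {z : ℂ | ∀ n, z ≠ (lam n : ℂ)} := by
  -- a map from the discrete space `ℕ` tending to infinity is proper, so its range is closed
  have hp : IsProperMap (fun n => (lam n : ℂ)) := by
    rw [isProperMap_iff_tendsto_cocompact]
    refine ⟨continuous_of_discreteTopology, ?_⟩
    rw [cocompact_eq_cofinite, Nat.cofinite_eq_atTop, ← Metric.cobounded_eq_cocompact, ← tendsto_norm_atTop_iff_cobounded]
    simpa using hlamT
  convert hp.isClosed_range.isOpen_compl using 1
  ext z
  simp [eq_comm]

lemma isPreconnected_poleFree (lam : ℕ → ℝ) :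
    IsPreconnected {z : ℂ | ∀ n, z ≠ (lam n : ℂ)} := by
  have hc : (range (fun n => (lam n : ℂ))).Countable := countable_range _
  have := (hc.isPathConnected_compl_of_one_lt_rank
    (by rw [Complex.rank_real_complex]; exact Nat.one_lt_ofNat)).isConnected.isPreconnected
  convert this using 1
  ext z
  simp [eq_comm]

/-- Off the poles, the zeros of the infinite product are exactly the `nu n`, even if the sequence
`nu` has a finite accumulation point. -/
lemma zero_iff_mem_range {lam nu : ℕ → ℝ} {G : ℂ → ℂ}
    (hlam0 : ∀ n, lam n ≠ 0)
    (hlamT : Tendsto (fun n => |lam n|) atTop atTop)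
    (hnu0 : ∀ n, nu n ≠ 0)
    (hG : TendstoLocallyUniformlyOn
      (fun m z => ∏ n ∈ Finset.range m, (z / (nu n : ℂ) - 1) * (z / (lam n : ℂ) - 1)⁻¹)
      G atTop {z : ℂ | ∀ n, z ≠ (lam n : ℂ)})
    {z : ℂ} (hz : z ∈ {z : ℂ | ∀ n, z ≠ (lam n : ℂ)}) :
    G z = 0 ↔ ∃ n, z = (nu n : ℂ) := by
  set U := {z : ℂ | ∀ n, z ≠ (lam n : ℂ)} with hU
  set F : ℕ → ℂ → ℂ :=
    fun m z => ∏ n ∈ Finset.range m, (z / (nu n : ℂ) - 1) * (z / (lam n : ℂ) - 1)⁻¹ with hFdef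
  have hUo : IsOpen U := isOpen_poleFree hlamT
  have hl : ∀ w ∈ U, ∀ n, w / (lam n : ℂ) - 1 ≠ 0 := by
    intro w hw n h
    exact hw n ((div_eq_one_iff_eq (by exact_mod_cast hlam0 n)).1 (sub_eq_zero.1 h))
  have hn : ∀ (w : ℂ) (n : ℕ), w / (nu n : ℂ) - 1 = 0 ↔ w = nu n := by
    intro w n
    rw [sub_eq_zero, div_eq_one_iff_eq (by exact_mod_cast hnu0 n)]
  have hFd : ∀ k, DifferentiableOn ℂ (F k) U := by
    intro k
    refine DifferentiableOn.fun_finsetProd fun n _ => ?_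
    exact ((differentiableOn_id.div_const _).sub_const _).mul
      (((differentiableOn_id.div_const _).sub_const _).inv fun w hw => hl w hw n)
  have hGd : DifferentiableOn ℂ G U := hG.differentiableOn (Eventually.of_forall hFd) hUo
  have hnuzero : ∀ n, (nu n : ℂ) ∈ U → G (nu n) = 0 := by
    intro n hnU
    refine tendsto_nhds_unique (hG.tendsto_at hnU) (tendsto_const_nhds.congr' ?_)
    filter_upwards [eventually_gt_atTop n] with k hk
    refine (Finset.prod_eq_zero (Finset.mem_range.2 hk) ?_).symm
    rw [(hn _ n).2 rfl, zero_mul]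
  constructor
  swap
  · rintro ⟨n, rfl⟩
    exact hnuzero n hz
  intro hGz
  by_contra! hne
  have h0U : (0 : ℂ) ∈ U := fun n h => hlam0 n (by exact_mod_cast h.symm)
  have hG1 : G 0 = 1 := by
    refine tendsto_nhds_unique (hG.tendsto_at h0U) (tendsto_const_nhds.congr fun k => ?_)
    simp [hFdef]
  have hiso : ∀ᶠ w in 𝓝[≠] z, G w ≠ 0 := by
    by_contra hfreq
    have := (hGd.analyticOnNhd hUo).eqOn_zero_of_preconnected_of_frequently_eq_zero
      (isPreconnected_poleFree lam) hz ((not_eventually.1 hfreq).mono fun _ => not_not.1) h0U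
    rw [hG1] at this
    exact one_ne_zero this
  obtain ⟨r, hr, hball⟩ := Metric.nhds_basis_closedBall.eventually_iff.1
    ((eventually_nhdsWithin_iff.1 hiso).and (hUo.mem_nhds hz))
  have hsub : Metric.closedBall z r ⊆ U := fun w hw => (hball hw).2
  refine hurwitz_ne_zero hr (fun k => (hFd k).mono hsub) ?_
    (hGd.continuousOn.mono (Metric.sphere_subset_closedBall.trans hsub)) ?_
    ((tendstoLocallyUniformlyOn_iff_tendstoUniformlyOn_of_compact
      (isCompact_closedBall z r)).1 (hG.mono hsub)) hGz
  · intro k w hw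
    refine Finset.prod_ne_zero_iff.2 fun n _ => mul_ne_zero ?_ (inv_ne_zero (hl w (hsub hw) n))
    intro h
    obtain rfl := (hn w n).1 h
    exact (hball hw).1 (hne n).symm (hnuzero n (hsub hw))
  · intro w hw
    exact (hball (Metric.sphere_subset_closedBall hw)).1 (Metric.ne_of_mem_sphere hw hr.ne')

/-- analytic core of Theorem 4.3, Inverse Problem V:
with the normalizing constants `L, L̃` unknown, one additional common eigenvalue
`ν_m = ν̃_m` forces the two partial fraction representations to coincide. -/
theorem inverse_problem_V (lam nu nut : ℕ → ℝ) (G Gt : ℂ → ℂ) (L Lt : ℝ) (A : ℕ → ℝ)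
    (hlam0 : ∀ n, lam n ≠ 0)
    (hlamT : Tendsto (fun n => |lam n|) atTop atTop)
    (hnu0 : ∀ n, nu n ≠ 0) (hnut0 : ∀ n, nut n ≠ 0)
    (hnumono : StrictMono nu) (hnutmono : StrictMono nut)
    (hdisj : ∀ m n, nu m ≠ lam n) (hdisj' : ∀ m n, nut m ≠ lam n)
    (hG : TendstoLocallyUniformlyOn
      (fun m z => ∏ n ∈ Finset.range m, (z / (nu n : ℂ) - 1) * (z / (lam n : ℂ) - 1)⁻¹)
      G atTop {z : ℂ | ∀ n, z ≠ (lam n : ℂ)})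
    (hGt : TendstoLocallyUniformlyOn
      (fun m z => ∏ n ∈ Finset.range m, (z / (nut n : ℂ) - 1) * (z / (lam n : ℂ) - 1)⁻¹)
      Gt atTop {z : ℂ | ∀ n, z ≠ (lam n : ℂ)})
    (hrep : ∀ z ∈ {z : ℂ | ∀ n, z ≠ (lam n : ℂ)},
      Summable (fun n => (A n : ℂ) / (z - (lam n : ℂ))) ∧
      G z = (L : ℂ) + ∑' n, (A n : ℂ) / (z - (lam n : ℂ)))
    (hrept : ∀ z ∈ {z : ℂ | ∀ n, z ≠ (lam n : ℂ)},
      Summable (fun n => (A n : ℂ) / (z - (lam n : ℂ))) ∧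
      Gt z = (Lt : ℂ) + ∑' n, (A n : ℂ) / (z - (lam n : ℂ)))
    (m : ℕ) (hm : nu m = nut m) :
    L = Lt ∧ ∀ n, nu n = nut n := by
  have hz := fun {z} => zero_iff_mem_range (z := z) hlam0 hlamT hnu0 hG
  have hzt := fun {z} => zero_iff_mem_range (z := z) hlam0 hlamT hnut0 hGt
  have hU : ∀ n, (nu n : ℂ) ∈ {z : ℂ | ∀ n, z ≠ (lam n : ℂ)} :=
    fun n k h => hdisj n k (by exact_mod_cast h)
  have hUt : ∀ n, (nut n : ℂ) ∈ {z : ℂ | ∀ n, z ≠ (lam n : ℂ)} :=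
    fun n k h => hdisj' n k (by exact_mod_cast h)
  have hL : (L : ℂ) = Lt := by
    have h1 := (hz (hU m)).2 ⟨m, rfl⟩
    have h2 := (hzt (hU m)).2 ⟨m, by rw [hm]⟩
    rw [(hrep _ (hU m)).2] at h1
    rw [(hrept _ (hU m)).2] at h2
    exact add_right_cancel (h1.trans h2.symm)
  have hGG : ∀ z ∈ {z : ℂ | ∀ n, z ≠ (lam n : ℂ)}, G z = Gt z := fun z h => by
    rw [(hrep z h).2, (hrept z h).2, hL]
  refine ⟨by exact_mod_cast hL, congrFun ((hnumono.range_inj hnutmono).1 ?_)⟩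
  apply Subset.antisymm
  · rintro _ ⟨n, rfl⟩
    obtain ⟨k, hk⟩ := (hzt (hU n)).1 (hGG _ (hU n) ▸ (hz (hU n)).2 ⟨n, rfl⟩)
    exact ⟨k, by exact_mod_cast hk.symm⟩
  · rintro _ ⟨n, rfl⟩
    obtain ⟨k, hk⟩ := (hz (hUt n)).1 ((hGG _ (hUt n)).trans ((hzt (hUt n)).2 ⟨n, rfl⟩))
    exact ⟨k, by exact_mod_cast hk.symm⟩
end

section
/- Let (λ_n)_{n∈ℕ} be a sequence of nonzero real numbers with |λ_n| → ∞, let λ*, ν* be nonzero real numbers with λ* ∉ {λ_n : n ∈ ℕ} and ν* ∉ {λ*} ∪ {λ_n : n ∈ ℕ}, and let (ν_n)_{n∈ℕ} and (ν̃_n)_{n∈ℕ} be strictly increasing sequences of nonzero real numbers, each disjoint from {λ*} ∪ {λ_n : n ∈ ℕ}. Suppose the products 𝒢(z) = (z/ν* − 1)(z/λ* − 1)^{-1}·∏_{n∈ℕ}(z/ν_n − 1)·(z/λ_n − 1)^{-1} and 𝒢̃(z) = (z/ν* − 1)(z/λ* − 1)^{-1}·∏_{n∈ℕ}(z/ν̃_n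 − 1)·(z/λ_n − 1)^{-1} converge locally uniformly on ℂ ∖ ({λ*} ∪ {λ_n : n ∈ ℕ}), and that there exist real numbers L, L̃, A* and a real sequence (A_n)_{n∈ℕ} such that for all z in that domain the series below converge and 𝒢(z) = L + A*/(z − λ*) + ∑_{n∈ℕ} A_n/(z − λ_n) and 𝒢̃(z) = L̃ + A*/(z − λ*) + ∑_{n∈ℕ} A_n/(z − λ_n). Then L = L̃ and ν_n = ν̃_n for every n ∈ ℕ. -/
/-!
The two representations differ only in their constants, so `G - Gt = L - Lt` on the domain.
Every partial product vanishes at `nuS`, hence so do `G` and `Gt`, and `L = Lt`. Thus `G = Gt`, and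
it remains to read off the sequence `nu` from the limit `G`.

The value `G 0 = 1` shows that `G` is not identically zero, so its zeros are isolated. Where
`G z ≠ 0` the factors of the product tend to `1`, which forces `|nu n| → ∞`
(`tendsto_zeros`). A Hurwitz-type argument (`factor_lower_bound`: the minimum modulus principle on a
small disc) then shows that at a point outside `range nu` the products of the paired factors stay
away from zero. So for `x ≠ nuS` one has `G x = 0` exactly when `x ∈ range nu`, and at `nuS`, where
the known factor contributes one zero already, `deriv G nuS = 0` exactly when `nuS ∈ range nu`.
Hence `G = Gt` gives `range nu = range nut`, and strictly increasing sequences with equal ranges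
are equal.
-/

open Filter Topology Bornology

namespace InverseVI

/-! ### The domain and the partial products -/

/-- The complex plane with the poles `lamS` and `lam n` removed. -/
abbrev dom (lam : ℕ → ℝ) (lamS : ℝ) : Set ℂ :=
  {z : ℂ | z ≠ (lamS : ℂ) ∧ ∀ n, z ≠ (lam n : ℂ)}

/-- The product of the first `m` paired factors, without the distinguished pair `nuS`, `lamS`. -/
noncomputable def core (lam nu : ℕ → ℝ) (m : ℕ) (z : ℂ) : ℂ :=
  ∏ n ∈ Finset.range m, (z / (nu n : ℂ) - 1) * (z / (lam n : ℂ) - 1)⁻¹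

/-- The `m`-th partial product, including the distinguished pair `nuS`, `lamS`. -/
noncomputable def full (lam : ℕ → ℝ) (lamS nuS : ℝ) (nu : ℕ → ℝ) (m : ℕ) (z : ℂ) : ℂ :=
  ((z / (nuS : ℂ) - 1) * (z / (lamS : ℂ) - 1)⁻¹) * core lam nu m z

/-- Also true for `a = 0`, where `z / a = 0` by convention. -/
lemma div_sub_one_ne_zero {z : ℂ} {a : ℝ} (h : z ≠ (a : ℂ)) : z / (a : ℂ) - 1 ≠ 0 := by
  intro h0
  have h1 : z / (a : ℂ) = 1 := sub_eq_zero.1 h0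
  have ha : (a : ℂ) ≠ 0 := by
    intro ha
    simp [ha] at h1
  exact h ((div_eq_one_iff_eq ha).1 h1)

lemma tendsto_ofReal_cobounded {u : ℕ → ℝ} (h : Tendsto (fun n => |u n|) atTop atTop) :
    Tendsto (fun n => (u n : ℂ)) atTop (cobounded ℂ) := by
  rw [← tendsto_norm_atTop_iff_cobounded]
  simpa using h

/-- A complex sequence tending to infinity has closed range, being a proper map from the discrete
space `ℕ`. -/
lemma isClosed_range_of_tendsto {u : ℕ → ℂ} (h : Tendsto u atTop (cobounded ℂ)) :
    IsClosed (Set.range u) := by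
  have hp : IsProperMap u := by
    rw [isProperMap_iff_tendsto_cocompact]
    refine ⟨continuous_of_discreteTopology, ?_⟩
    rw [Filter.cocompact_eq_cofinite ℕ, Nat.cofinite_eq_atTop, ← Metric.cobounded_eq_cocompact]
    exact h
  exact hp.isClosedMap.isClosed_range

lemma dom_eq (lam : ℕ → ℝ) (lamS : ℝ) :
    dom lam lamS = ({(lamS : ℂ)} ∪ Set.range (fun n => (lam n : ℂ)))ᶜ := by
  ext z
  simp only [dom, Set.mem_ofPred_eq, Set.mem_compl_iff, Set.mem_union, Set.mem_singleton_iff,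
    Set.mem_range, not_or, not_exists, ne_eq]
  exact and_congr_right fun _ => forall_congr' fun n => by rw [eq_comm]

lemma isOpen_dom {lam : ℕ → ℝ} (lamS : ℝ) (hlamT : Tendsto (fun n => |lam n|) atTop atTop) :
    IsOpen (dom lam lamS) := by
  rw [dom_eq, isOpen_compl_iff]
  exact isClosed_singleton.union (isClosed_range_of_tendsto (tendsto_ofReal_cobounded hlamT))

lemma isPreconnected_dom (lam : ℕ → ℝ) (lamS : ℝ) : IsPreconnected (dom lam lamS) := by
  rw [dom_eq]
  refine (Set.Countable.isConnected_compl_of_one_lt_rank ?_ ?_).isPreconnected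
  · simp [Complex.rank_real_complex]
  · exact (Set.countable_singleton _).union (Set.countable_range _)

lemma differentiableOn_core (lam : ℕ → ℝ) (lamS : ℝ) (nu : ℕ → ℝ) (m : ℕ) :
    DifferentiableOn ℂ (core lam nu m) (dom lam lamS) := by
  unfold core
  refine DifferentiableOn.fun_finsetProd fun n _ => ?_
  refine DifferentiableOn.mul (by fun_prop) (DifferentiableOn.fun_inv (by fun_prop) ?_)
  exact fun z hz => div_sub_one_ne_zero (hz.2 n)

lemma differentiableOn_prefactor (lam : ℕ → ℝ) (lamS nuS : ℝ) :
    DifferentiableOn ℂ (fun z => (z / (nuS : ℂ) - 1) * (z / (lamS : ℂ) - 1)⁻¹)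
      (dom lam lamS) := by
  refine DifferentiableOn.mul (by fun_prop) (DifferentiableOn.fun_inv (by fun_prop) ?_)
  exact fun z hz => div_sub_one_ne_zero hz.1

lemma differentiableOn_full (lam : ℕ → ℝ) (lamS nuS : ℝ) (nu : ℕ → ℝ) (m : ℕ) :
    DifferentiableOn ℂ (full lam lamS nuS nu m) (dom lam lamS) :=
  (differentiableOn_prefactor lam lamS nuS).mul (differentiableOn_core lam lamS nu m)

lemma core_ne_zero {lam : ℕ → ℝ} {lamS : ℝ} {nu : ℕ → ℝ} {z : ℂ} (hz : z ∈ dom lam lamS)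
    (hnu : z ∉ Set.range (fun n => (nu n : ℂ))) (m : ℕ) : core lam nu m z ≠ 0 :=
  Finset.prod_ne_zero_iff.2 fun n _ => mul_ne_zero
    (div_sub_one_ne_zero fun h => hnu ⟨n, h.symm⟩) (inv_ne_zero (div_sub_one_ne_zero (hz.2 n)))

lemma core_eventually_eq_zero (lam : ℕ → ℝ) {nu : ℕ → ℝ} {k : ℕ} (hk : nu k ≠ 0) :
    ∀ᶠ m in atTop, core lam nu m (nu k) = 0 := by
  filter_upwards [eventually_gt_atTop k] with m hm
  refine Finset.prod_eq_zero (Finset.mem_range.2 hm) ?_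
  have : (nu k : ℂ) ≠ 0 := by exact_mod_cast hk
  simp [div_self this]

/-! ### Zeros of the limit -/

section limit

variable {lam : ℕ → ℝ} {lamS nuS : ℝ} {nu : ℕ → ℝ} {G : ℂ → ℂ}

lemma zero_mem_dom (hlam0 : ∀ n, lam n ≠ 0) (hlamS0 : lamS ≠ 0) : (0 : ℂ) ∈ dom lam lamS :=
  ⟨by exact_mod_cast hlamS0.symm, fun n => by exact_mod_cast (hlam0 n).symm⟩

/-- The limit equals `1` at the origin, so by the identity theorem its zeros are isolated. -/
lemma limit_eventually_ne_zero (hlam0 : ∀ n, lam n ≠ 0)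
    (hlamT : Tendsto (fun n => |lam n|) atTop atTop) (hlamS0 : lamS ≠ 0)
    (hG : TendstoLocallyUniformlyOn (full lam lamS nuS nu) G atTop (dom lam lamS))
    {z₀ : ℂ} (hz₀ : z₀ ∈ dom lam lamS) : ∀ᶠ z in 𝓝[≠] z₀, G z ≠ 0 := by
  have hopen := isOpen_dom lamS hlamT
  have h0 := zero_mem_dom hlam0 hlamS0
  have hG0 : G 0 = 1 := by
    refine tendsto_nhds_unique (hG.tendsto_at h0) ?_
    simp [full, core]
  have han : AnalyticOnNhd ℂ G (dom lam lamS) :=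
    (hG.differentiableOn (.of_forall fun m => differentiableOn_full lam lamS nuS nu m)
      hopen).analyticOnNhd hopen
  by_contra hcon
  have hfreq : ∃ᶠ z in 𝓝[≠] z₀, G z = 0 := hcon
  have := han.eqOn_zero_of_preconnected_of_frequently_eq_zero (isPreconnected_dom lam lamS)
    hz₀ hfreq h0
  simp [hG0] at this

/-- At a nonzero point where the limit does not vanish the factors tend to `1`; as `|lam n| → ∞`,
this forces `1 / nu n → 0`. -/
lemma tendsto_zeros (hlam0 : ∀ n, lam n ≠ 0)
    (hlamT : Tendsto (fun n => |lam n|) atTop atTop) (hlamS0 : lamS ≠ 0) (hnu0 : ∀ n, nu n ≠ 0)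
    (hG : TendstoLocallyUniformlyOn (full lam lamS nuS nu) G atTop (dom lam lamS)) :
    Tendsto (fun n => (nu n : ℂ)) atTop (cobounded ℂ) := by
  have h0 := zero_mem_dom hlam0 hlamS0
  obtain ⟨z, ⟨hGz, hzd⟩, hz0⟩ : ∃ z, (G z ≠ 0 ∧ z ∈ dom lam lamS) ∧ z ≠ 0 := by
    have h1 := limit_eventually_ne_zero hlam0 hlamT hlamS0 hG h0
    have h2 : ∀ᶠ z in 𝓝[≠] (0 : ℂ), z ∈ dom lam lamS :=
      nhdsWithin_le_nhds ((isOpen_dom lamS hlamT).mem_nhds h0)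
    have h3 : ∀ᶠ z in 𝓝[≠] (0 : ℂ), z ≠ 0 := eventually_mem_nhdsWithin
    exact ((h1.and h2).and h3).exists
  have hF := hG.tendsto_at hzd
  have hratio : Tendsto (fun m => full lam lamS nuS nu (m + 1) z / full lam lamS nuS nu m z)
      atTop (𝓝 1) := by
    have := (hF.comp (tendsto_add_atTop_nat 1)).div hF hGz
    rwa [div_self hGz] at this
  have hfac : Tendsto (fun m => (z / (nu m : ℂ) - 1) * (z / (lam m : ℂ) - 1)⁻¹) atTop (𝓝 1) := by
    refine hratio.congr' ?_
    filter_upwards [hF.eventually_ne hGz] with m hm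
    have : full lam lamS nuS nu (m + 1) z =
        ((z / (nu m : ℂ) - 1) * (z / (lam m : ℂ) - 1)⁻¹) * full lam lamS nuS nu m z := by
      simp only [full, core, Finset.prod_range_succ]
      ring
    rw [this, mul_div_cancel_right₀ _ hm]
  have hlaminv : Tendsto (fun m => z / (lam m : ℂ) - 1) atTop (𝓝 (z * 0 - 1)) := by
    simp only [div_eq_mul_inv]
    exact ((tendsto_inv₀_cobounded.comp (tendsto_ofReal_cobounded hlamT)).const_mul z).sub_const 1
  have hnum : Tendsto (fun m => z / (nu m : ℂ) - 1) atTop (𝓝 (-1)) := by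
    have := hfac.mul hlaminv
    simp only [mul_zero, zero_sub, one_mul] at this
    refine this.congr fun m => ?_
    rw [inv_mul_cancel_right₀ (div_sub_one_ne_zero (hzd.2 m))]
  have hinv : Tendsto (fun m => (nu m : ℂ)⁻¹) atTop (𝓝 0) := by
    have := (hnum.add_const 1).const_mul z⁻¹
    simp only [neg_add_cancel, mul_zero] at this
    refine this.congr fun m => ?_
    field_simp
    ring
  have hinv' : Tendsto (fun m => (nu m : ℂ)⁻¹) atTop (𝓝[≠] 0) := by
    refine tendsto_nhdsWithin_iff.2 ⟨hinv, .of_forall fun m => ?_⟩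
    simpa using hnu0 m
  simpa [Function.comp_def] using tendsto_inv₀_nhdsNE_zero.comp hinv'

/-- A Hurwitz-type bound. Around a point outside `range nu` there is a closed disc on which no
`core lam nu m` vanishes, and on whose boundary circle `G` and the prefactor have no zeros. The
full products, hence the functions `core lam nu m`, are eventually bounded below on the circle, and
the maximum principle for `1 / core` carries the bound to the centre. The point `nuS` is allowed as
centre, since `core` omits the factor vanishing there. -/
lemma factor_lower_bound (hlam0 : ∀ n, lam n ≠ 0)
    (hlamT : Tendsto (fun n => |lam n|) atTop atTop) (hlamS0 : lamS ≠ 0) (hnu0 : ∀ n, nu n ≠ 0)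
    (hG : TendstoLocallyUniformlyOn (full lam lamS nuS nu) G atTop (dom lam lamS))
    {z₀ : ℂ} (hz₀ : z₀ ∈ dom lam lamS) (hz₀nu : z₀ ∉ Set.range (fun n => (nu n : ℂ))) :
    ∃ c > 0, ∀ᶠ m in atTop, c ≤ ‖core lam nu m z₀‖ := by
  have hopen := isOpen_dom lamS hlamT
  have hclosed := isClosed_range_of_tendsto (tendsto_zeros hlam0 hlamT hlamS0 hnu0 hG)
  have h1 : ∀ᶠ z in 𝓝 z₀, z ∈ dom lam lamS ∧ z ∉ Set.range (fun n => (nu n : ℂ)) ∧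
      (z ≠ z₀ → G z ≠ 0) := by
    have := limit_eventually_ne_zero hlam0 hlamT hlamS0 hG hz₀
    rw [eventually_nhdsWithin_iff] at this
    filter_upwards [hopen.mem_nhds hz₀, hclosed.isOpen_compl.mem_nhds hz₀nu, this]
      with z a b c using ⟨a, b, c⟩
  obtain ⟨r, hr, hball⟩ := Metric.nhds_basis_closedBall.eventually_iff.1 h1
  have hsub : Metric.closedBall z₀ r ⊆ dom lam lamS := fun z hz => (hball hz).1
  have hssub : Metric.sphere z₀ r ⊆ dom lam lamS := Metric.sphere_subset_closedBall.trans hsub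
  have hK : IsCompact (Metric.sphere z₀ r) := isCompact_sphere z₀ r
  have hne : (Metric.sphere z₀ r).Nonempty := NormedSpace.sphere_nonempty.2 hr.le
  have hGc : ContinuousOn G (Metric.sphere z₀ r) :=
    (hG.differentiableOn (.of_forall fun m => differentiableOn_full lam lamS nuS nu m)
      hopen).continuousOn.mono hssub
  obtain ⟨x₁, hx₁, hmin⟩ := hK.exists_isMinOn hne hGc.norm
  have hδ : 0 < ‖G x₁‖ := by
    refine norm_pos_iff.2 ((hball (Metric.sphere_subset_closedBall hx₁)).2.2 ?_)
    exact Metric.ne_of_mem_sphere hx₁ hr.ne'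
  obtain ⟨B, hB⟩ := hK.exists_bound_of_continuousOn
    ((differentiableOn_prefactor lam lamS nuS).continuousOn.mono hssub)
  have hunif := (tendstoLocallyUniformlyOn_iff_tendstoUniformlyOn_of_compact hK).1 (hG.mono hssub)
  rw [Metric.tendstoUniformlyOn_iff] at hunif
  have hev := hunif (‖G x₁‖ / 2) (half_pos hδ)
  -- The prefactor is at most `|B| + 1` on the circle; the summand `1` keeps the divisor positive.
  have hB' : 0 < |B| + 1 := by positivity
  set c := ‖G x₁‖ / 2 / (|B| + 1) with hc
  have hcpos : 0 < c := by positivity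
  refine ⟨c, hcpos, ?_⟩
  filter_upwards [hev] with m hm
  have hcs : ∀ z ∈ Metric.sphere z₀ r, c ≤ ‖core lam nu m z‖ := by
    intro z hz
    have a1 := hm z hz
    have a2 : ‖G x₁‖ ≤ ‖G z‖ := hmin hz
    rw [dist_eq_norm] at a1
    have a3 := norm_sub_norm_le (G z) (full lam lamS nuS nu m z)
    have a4 : ‖full lam lamS nuS nu m z‖ ≤ (|B| + 1) * ‖core lam nu m z‖ := by
      rw [full, norm_mul]
      gcongr
      linarith [hB z hz, le_abs_self B]
    rw [hc, div_le_iff₀' hB']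
    linarith
  have hdiff : DifferentiableOn ℂ (fun z => (core lam nu m z)⁻¹) (Metric.closedBall z₀ r) :=
    DifferentiableOn.fun_inv ((differentiableOn_core lam lamS nu m).mono hsub)
      fun z hz => core_ne_zero (hsub hz) (hball hz).2.1 m
  have hmax : ‖(core lam nu m z₀)⁻¹‖ ≤ c⁻¹ := by
    refine Complex.norm_le_of_forall_mem_frontier_norm_le (U := Metric.ball z₀ r)
      (f := fun z => (core lam nu m z)⁻¹) Metric.isBounded_ball
      (hdiff.diffContOnCl_ball subset_rfl) ?_ (subset_closure (Metric.mem_ball_self hr))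
    intro z hz
    rw [frontier_ball z₀ hr.ne'] at hz
    rw [norm_inv]
    exact inv_anti₀ hcpos (hcs z hz)
  rw [norm_inv] at hmax
  exact (inv_le_inv₀ (norm_pos_iff.2 (core_ne_zero hz₀ hz₀nu m)) hcpos).1 hmax

/-- If the products `core` at `x`, up to a nonzero constant, tend to `w`, then `w = 0` detects
membership of `x` in `range nu`. -/
lemma eq_zero_iff_mem_range (hlam0 : ∀ n, lam n ≠ 0)
    (hlamT : Tendsto (fun n => |lam n|) atTop atTop) (hlamS0 : lamS ≠ 0) (hnu0 : ∀ n, nu n ≠ 0)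
    (hG : TendstoLocallyUniformlyOn (full lam lamS nuS nu) G atTop (dom lam lamS))
    {x : ℝ} (hx : (x : ℂ) ∈ dom lam lamS) {a w : ℂ} (ha : a ≠ 0)
    (hw : Tendsto (fun m => a * core lam nu m x) atTop (𝓝 w)) :
    w = 0 ↔ x ∈ Set.range nu := by
  constructor
  · rintro rfl
    by_contra hxnu
    obtain ⟨c, hc, hev⟩ := factor_lower_bound hlam0 hlamT hlamS0 hnu0 hG hx (by
      rintro ⟨n, hn⟩
      exact hxnu ⟨n, Complex.ofReal_injective hn⟩)
    have h1 : ‖a‖ * c ≤ ‖(0 : ℂ)‖ := by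
      refine ge_of_tendsto hw.norm ?_
      filter_upwards [hev] with m hm
      rw [norm_mul]
      gcongr
    have h2 : 0 < ‖a‖ * c := mul_pos (norm_pos_iff.2 ha) hc
    rw [norm_zero] at h1
    linarith
  · rintro ⟨k, rfl⟩
    refine tendsto_nhds_unique hw (tendsto_const_nhds.congr' ?_)
    filter_upwards [core_eventually_eq_zero lam (hnu0 k)] with m hm
    simp [hm]

lemma limit_eq_zero_iff (hlam0 : ∀ n, lam n ≠ 0)
    (hlamT : Tendsto (fun n => |lam n|) atTop atTop) (hlamS0 : lamS ≠ 0) (hnu0 : ∀ n, nu n ≠ 0)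
    (hG : TendstoLocallyUniformlyOn (full lam lamS nuS nu) G atTop (dom lam lamS))
    {x : ℝ} (hx : (x : ℂ) ∈ dom lam lamS) (hxS : x ≠ nuS) :
    G x = 0 ↔ x ∈ Set.range nu :=
  eq_zero_iff_mem_range hlam0 hlamT hlamS0 hnu0 hG hx
    (mul_ne_zero (div_sub_one_ne_zero (Complex.ofReal_injective.ne hxS))
      (inv_ne_zero (div_sub_one_ne_zero hx.1))) (hG.tendsto_at hx)

/-- The known factor gives `G` a zero at `nuS` in any case; that zero is multiple exactly when
`nuS` also occurs among the `nu n`. -/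
lemma deriv_limit_eq_zero_iff (hlam0 : ∀ n, lam n ≠ 0)
    (hlamT : Tendsto (fun n => |lam n|) atTop atTop) (hlamS0 : lamS ≠ 0) (hnuS0 : nuS ≠ 0)
    (hnu0 : ∀ n, nu n ≠ 0)
    (hG : TendstoLocallyUniformlyOn (full lam lamS nuS nu) G atTop (dom lam lamS))
    (hx : (nuS : ℂ) ∈ dom lam lamS) :
    deriv G nuS = 0 ↔ nuS ∈ Set.range nu := by
  have hopen := isOpen_dom lamS hlamT
  have hnuSC : (nuS : ℂ) ≠ 0 := by exact_mod_cast hnuS0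
  have ha : (nuS : ℂ)⁻¹ * ((nuS : ℂ) / (lamS : ℂ) - 1)⁻¹ ≠ 0 :=
    mul_ne_zero (inv_ne_zero hnuSC) (inv_ne_zero (div_sub_one_ne_zero hx.1))
  refine eq_zero_iff_mem_range hlam0 hlamT hlamS0 hnu0 hG hx ha ?_
  have hd := (hG.deriv (.of_forall fun m => differentiableOn_full lam lamS nuS nu m)
    hopen).tendsto_at hx
  -- The partial products vanish at `nuS`, so only the derivative of the first factor contributes.
  refine hd.congr fun m => ?_
  have h1 : HasDerivAt (fun z : ℂ => z / (nuS : ℂ) - 1) (1 / (nuS : ℂ)) nuS :=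
    ((hasDerivAt_id _).div_const _).sub_const 1
  have h2 : DifferentiableAt ℂ (fun z => (z / (lamS : ℂ) - 1)⁻¹ * core lam nu m z) nuS := by
    refine DifferentiableAt.mul (DifferentiableAt.fun_inv (by fun_prop)
      (div_sub_one_ne_zero hx.1)) ?_
    exact (differentiableOn_core lam lamS nu m).differentiableAt (hopen.mem_nhds hx)
  have h3 := (h1.fun_mul h2.hasDerivAt).deriv
  have h4 : full lam lamS nuS nu m = fun z : ℂ =>
      (z / (nuS : ℂ) - 1) * ((z / (lamS : ℂ) - 1)⁻¹ * core lam nu m z) := by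
    funext z
    rw [full, mul_assoc]
  simp only [Function.comp_apply, h4]
  rw [h3, div_self hnuSC]
  ring

lemma limit_nuS (hnuS0 : nuS ≠ 0)
    (hG : TendstoLocallyUniformlyOn (full lam lamS nuS nu) G atTop (dom lam lamS))
    (hx : (nuS : ℂ) ∈ dom lam lamS) : G nuS = 0 := by
  have hnuSC : (nuS : ℂ) ≠ 0 := by exact_mod_cast hnuS0
  refine tendsto_nhds_unique (hG.tendsto_at hx) ?_
  simp [full, div_self hnuSC]

end limit

end InverseVI

/-! ### Uniqueness -/

/-- analytic core of Theorem 4.4, Inverse Problem VI: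
one extra residue `A*` at an additional pole `λ*`, whose paired zero `ν*` is known,
replaces knowledge of the unknown normalizing constant and forces the two
representations to coincide. -/
theorem inverse_problem_VI (lam : ℕ → ℝ) (lamS nuS : ℝ) (nu nut : ℕ → ℝ)
    (G Gt : ℂ → ℂ) (L Lt AS : ℝ) (A : ℕ → ℝ)
    (hlam0 : ∀ n, lam n ≠ 0)
    (hlamT : Tendsto (fun n => |lam n|) atTop atTop)
    (hlamS0 : lamS ≠ 0) (hnuS0 : nuS ≠ 0)
    (hlamS : ∀ n, lamS ≠ lam n)
    (hnuS1 : nuS ≠ lamS) (hnuS2 : ∀ n, nuS ≠ lam n)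
    (hnu0 : ∀ n, nu n ≠ 0) (hnut0 : ∀ n, nut n ≠ 0)
    (hnumono : StrictMono nu) (hnutmono : StrictMono nut)
    (hdisjS : ∀ m, nu m ≠ lamS) (hdisjS' : ∀ m, nut m ≠ lamS)
    (hdisj : ∀ m n, nu m ≠ lam n) (hdisj' : ∀ m n, nut m ≠ lam n)
    (hG : TendstoLocallyUniformlyOn
      (fun m z => ((z / (nuS : ℂ) - 1) * (z / (lamS : ℂ) - 1)⁻¹) *
        ∏ n ∈ Finset.range m, (z / (nu n : ℂ) - 1) * (z / (lam n : ℂ) - 1)⁻¹)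
      G atTop {z : ℂ | z ≠ (lamS : ℂ) ∧ ∀ n, z ≠ (lam n : ℂ)})
    (hGt : TendstoLocallyUniformlyOn
      (fun m z => ((z / (nuS : ℂ) - 1) * (z / (lamS : ℂ) - 1)⁻¹) *
        ∏ n ∈ Finset.range m, (z / (nut n : ℂ) - 1) * (z / (lam n : ℂ) - 1)⁻¹)
      Gt atTop {z : ℂ | z ≠ (lamS : ℂ) ∧ ∀ n, z ≠ (lam n : ℂ)})
    (hrep : ∀ z ∈ {z : ℂ | z ≠ (lamS : ℂ) ∧ ∀ n, z ≠ (lam n : ℂ)},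
      Summable (fun n => (A n : ℂ) / (z - (lam n : ℂ))) ∧
      G z = (L : ℂ) + (AS : ℂ) / (z - (lamS : ℂ)) + ∑' n, (A n : ℂ) / (z - (lam n : ℂ)))
    (hrept : ∀ z ∈ {z : ℂ | z ≠ (lamS : ℂ) ∧ ∀ n, z ≠ (lam n : ℂ)},
      Summable (fun n => (A n : ℂ) / (z - (lam n : ℂ))) ∧
      Gt z = (Lt : ℂ) + (AS : ℂ) / (z - (lamS : ℂ)) + ∑' n, (A n : ℂ) / (z - (lam n : ℂ))) :
    L = Lt ∧ ∀ n, nu n = nut n := by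
  have hG' : TendstoLocallyUniformlyOn (InverseVI.full lam lamS nuS nu) G atTop
    (InverseVI.dom lam lamS) := hG
  have hGt' : TendstoLocallyUniformlyOn (InverseVI.full lam lamS nuS nut) Gt atTop
    (InverseVI.dom lam lamS) := hGt
  have hS : (nuS : ℂ) ∈ InverseVI.dom lam lamS :=
    ⟨by exact_mod_cast hnuS1, fun n => by exact_mod_cast hnuS2 n⟩
  have hL : L = Lt := by
    have h1 := (hrep _ hS).2
    have h2 := (hrept _ hS).2
    rw [InverseVI.limit_nuS hnuS0 hG' hS] at h1
    rw [InverseVI.limit_nuS hnuS0 hGt' hS, h1] at h2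
    exact_mod_cast add_right_cancel (add_right_cancel h2)
  refine ⟨hL, ?_⟩
  have heq : Set.EqOn G Gt (InverseVI.dom lam lamS) := by
    intro z hz
    rw [(hrep z hz).2, (hrept z hz).2, hL]
  have hderiv : deriv G nuS = deriv Gt nuS :=
    (heq.eventuallyEq_of_mem ((InverseVI.isOpen_dom lamS hlamT).mem_nhds hS)).deriv_eq
  have hmem : ∀ x : ℝ, (x : ℂ) ∈ InverseVI.dom lam lamS →
      (x ∈ Set.range nu ↔ x ∈ Set.range nut) := by
    intro x hx
    by_cases hxS : x = nuS
    -- At `nuS` both limits vanish anyway, so derivatives are compared instead of values.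
    · subst hxS
      rw [← InverseVI.deriv_limit_eq_zero_iff hlam0 hlamT hlamS0 hnuS0 hnu0 hG' hx,
        ← InverseVI.deriv_limit_eq_zero_iff hlam0 hlamT hlamS0 hnuS0 hnut0 hGt' hx, hderiv]
    · rw [← InverseVI.limit_eq_zero_iff hlam0 hlamT hlamS0 hnu0 hG' hx hxS,
        ← InverseVI.limit_eq_zero_iff hlam0 hlamT hlamS0 hnut0 hGt' hx hxS, heq hx]
  have hrange : Set.range nu = Set.range nut := by
    refine Set.Subset.antisymm ?_ ?_
    · rintro _ ⟨k, rfl⟩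
      exact (hmem _ ⟨by exact_mod_cast hdisjS k, fun n => by exact_mod_cast hdisj k n⟩).1 ⟨k, rfl⟩
    · rintro _ ⟨k, rfl⟩
      exact (hmem _ ⟨by exact_mod_cast hdisjS' k, fun n => by exact_mod_cast hdisj' k n⟩).2 ⟨k, rfl⟩
  exact fun n => congrFun ((hnumono.range_inj hnutmono).1 hrange) n
end

section
/- Let (λ_n)_{n∈ℕ} be a strictly increasing sequence of real numbers with λ_n → ∞ and let (ν_n)_{n∈ℕ} be a real sequence with λ_n < ν_n < λ_{n+1} for all n ∈ ℕ and ∑_{n∈ℕ}(ν_n − λ_n) < ∞. Then for every z ∈ ℂ with Im z > 0, the infinite product F_ν(z) = ∏_{n∈ℕ}(z − ν_n)/(z − λ_n) converges and Im F_ν(z) > 0; equivalently, the argument of F_ν(z), given by ∑_{n∈ℕ}(arg(z − ν_n) − arg(z − λ_n)), lies strictly between 0 and π. -/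
/-!
Fix `z` in the upper half-plane. The function `x ↦ arg (z - x)` is strictly increasing in the real
variable `x` with values in `(0, π)`, because `(z - b) / (z - a)` has positive imaginary part for
`a < b` and its argument is therefore the difference of the arguments (`arg_div_eq_sub`).
By interlacing, the intervals `(lam n, nu n)` are disjoint and ordered, so the partial sums of
`arg (z - nu n) - arg (z - lam n)` are bounded by `arg (z - lam N) - arg (z - lam 0)`
(`sum_arg_le`), hence by `π - arg (z - lam 0) < π`. Each factor of the product differs from `1` by
at most `(nu n - lam n) / Im z`, so the principal logarithms of the factors are summable and the
product is the exponential of their sum, whose imaginary part is the sum of the argument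
differences. As that sum lies in `(0, π)`, it is the argument of the product.
-/

open Filter Real

lemma div_im_pos {z : ℂ} (hz : 0 < z.im) {a b : ℝ} (hab : a < b) :
    0 < ((z - (b : ℂ)) / (z - (a : ℂ))).im := by
  have hne : z - (a : ℂ) ≠ 0 := fun h => by
    have := congrArg Complex.im h
    simp at this
    exact hz.ne' this
  have hN : 0 < Complex.normSq (z - (a : ℂ)) := Complex.normSq_pos.mpr hne
  rw [Complex.div_im, ← sub_div]
  apply div_pos _ hN
  simp only [Complex.sub_im, Complex.sub_re, Complex.ofReal_re, Complex.ofReal_im, sub_zero]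
  nlinarith [mul_pos hz (sub_pos.mpr hab)]

lemma arg_mem_Ioo_of_im_pos {w : ℂ} (hw : 0 < w.im) : 0 < w.arg ∧ w.arg < π := by
  refine ⟨(Complex.arg_nonneg_iff.mpr hw.le).lt_of_ne fun h => ?_,
    (Complex.arg_le_pi w).lt_of_ne fun h => ?_⟩
  · exact hw.ne' (Complex.arg_eq_zero_iff.mp h.symm).2
  · exact hw.ne' (Complex.arg_eq_pi_iff.mp h).2

lemma arg_sub_mem_Ioo {z : ℂ} (hz : 0 < z.im) (x : ℝ) :
    0 < (z - (x : ℂ)).arg ∧ (z - (x : ℂ)).arg < π := by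
  exact arg_mem_Ioo_of_im_pos (by simpa using hz)

/-- The two sides agree modulo `2π`, and both lie in `(-π, π)`. -/
lemma arg_div_eq_sub {z : ℂ} (hz : 0 < z.im) (a b : ℝ) :
    ((z - (b : ℂ)) / (z - (a : ℂ))).arg = (z - (b : ℂ)).arg - (z - (a : ℂ)).arg := by
  have hne : ∀ x : ℝ, z - (x : ℂ) ≠ 0 := fun x h => by
    have := congrArg Complex.im h
    simp at this
    exact hz.ne' this
  have h := Complex.arg_div_coe_angle (hne b) (hne a)
  rw [← Real.Angle.coe_sub] at h
  have h2 := congrArg Real.Angle.toReal h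
  rw [Complex.arg_coe_angle_toReal_eq_arg] at h2
  rw [h2, Real.Angle.toReal_coe_eq_self_iff]
  have ha := arg_sub_mem_Ioo hz a
  have hb := arg_sub_mem_Ioo hz b
  constructor <;> linarith

lemma arg_sub_strictMono {z : ℂ} (hz : 0 < z.im) : StrictMono fun x : ℝ => (z - (x : ℂ)).arg := by
  intro a b hab
  have him := div_im_pos hz hab
  have h := arg_div_eq_sub hz a b
  have hpos : 0 < ((z - (b : ℂ)) / (z - (a : ℂ))).arg := (arg_mem_Ioo_of_im_pos him).1
  simp only
  linarith

/-- Interlacing bounds the partial sums of the argument differences by a telescoping sum. -/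
lemma sum_arg_le {lam nu : ℕ → ℝ} (hintl : ∀ n, lam n < nu n ∧ nu n < lam (n + 1))
    {z : ℂ} (hz : 0 < z.im) (N : ℕ) :
    ∑ n ∈ Finset.range N, ((z - (nu n : ℂ)).arg - (z - (lam n : ℂ)).arg) ≤
      (z - (lam N : ℂ)).arg - (z - (lam 0 : ℂ)).arg := by
  rw [← Finset.sum_range_sub (fun n => (z - (lam n : ℂ)).arg)]
  refine Finset.sum_le_sum fun n _ => ?_
  have := arg_sub_strictMono hz (hintl n).2
  simp only at this
  linarith

lemma summable_factor_sub_one {lam nu : ℕ → ℝ} (hintl : ∀ n, lam n < nu n ∧ nu n < lam (n + 1))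
    (hsum : Summable fun n => nu n - lam n) {z : ℂ} (hz : 0 < z.im) :
    Summable fun n => (z - (nu n : ℂ)) / (z - (lam n : ℂ)) - 1 := by
  refine Summable.of_norm_bounded (hsum.div_const z.im) fun n => ?_
  have him : z.im ≤ ‖z - (lam n : ℂ)‖ := by
    simpa using (le_abs_self _).trans (Complex.abs_im_le_norm (z - (lam n : ℂ)))
  have hne : z - (lam n : ℂ) ≠ 0 := norm_pos_iff.mp (hz.trans_le him)
  have heq : (z - (nu n : ℂ)) / (z - (lam n : ℂ)) - 1 =
      -((nu n - lam n : ℝ) : ℂ) / (z - (lam n : ℂ)) := by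
    field_simp
    push_cast
    ring
  have hd : 0 < nu n - lam n := sub_pos.mpr (hintl n).1
  rw [heq, norm_div, norm_neg, Complex.norm_real, Real.norm_of_nonneg hd.le]
  gcongr

/-- from the proof of Theorem 3.3: the product
`F_ν(z) = ∏ (z − ν_n)/(z − λ_n)` with real interlacing zeros and poles is Herglotz:
for `Im z > 0` it converges and has positive imaginary part; equivalently its argument,
given by `∑ (arg(z − ν_n) − arg(z − λ_n))`, lies strictly between `0` and `π`. -/
theorem interlacing_product_is_Herglotz (lam nu : ℕ → ℝ)
    (hmono : StrictMono lam)
    (htend : Tendsto lam atTop atTop)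
    (hintl : ∀ n, lam n < nu n ∧ nu n < lam (n + 1))
    (hsum : Summable fun n => nu n - lam n) :
    ∀ z : ℂ, 0 < z.im →
      (Multipliable fun n => (z - (nu n : ℂ)) / (z - (lam n : ℂ))) ∧
      0 < (∏' n, (z - (nu n : ℂ)) / (z - (lam n : ℂ))).im ∧
      (Summable fun n => (z - (nu n : ℂ)).arg - (z - (lam n : ℂ)).arg) ∧
      (∏' n, (z - (nu n : ℂ)) / (z - (lam n : ℂ))).arg =
        ∑' n, ((z - (nu n : ℂ)).arg - (z - (lam n : ℂ)).arg) ∧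
      0 < ∑' n, ((z - (nu n : ℂ)).arg - (z - (lam n : ℂ)).arg) ∧
      ∑' n, ((z - (nu n : ℂ)).arg - (z - (lam n : ℂ)).arg) < π := by
  intro z hz
  have hdpos : ∀ n, 0 < (z - (nu n : ℂ)).arg - (z - (lam n : ℂ)).arg := fun n =>
    sub_pos.mpr (arg_sub_strictMono hz (hintl n).1)
  have hbound : ∀ N, ∑ n ∈ Finset.range N, ((z - (nu n : ℂ)).arg - (z - (lam n : ℂ)).arg) ≤
      π - (z - (lam 0 : ℂ)).arg := fun N =>
    (sum_arg_le hintl hz N).trans (sub_le_sub_right (arg_sub_mem_Ioo hz _).2.le _)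
  have hS := summable_of_sum_range_le (fun n => (hdpos n).le) hbound
  have hSpos := hS.tsum_pos (fun n => (hdpos n).le) 0 (hdpos 0)
  have hSlt : ∑' n, ((z - (nu n : ℂ)).arg - (z - (lam n : ℂ)).arg) < π :=
    (Real.tsum_le_of_sum_range_le (fun n => (hdpos n).le) hbound).trans_lt
      (sub_lt_self _ (arg_sub_mem_Ioo hz _).1)
  have hlog : Summable fun n => Complex.log ((z - (nu n : ℂ)) / (z - (lam n : ℂ))) := by
    simpa using Complex.summable_log_one_add_of_summable (summable_factor_sub_one hintl hsum hz)
  have hne : ∀ n, (z - (nu n : ℂ)) / (z - (lam n : ℂ)) ≠ 0 := fun n h => by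
    simpa [h] using div_im_pos hz (hintl n).1
  have hprod := Complex.cexp_tsum_eq_tprod hne hlog
  have him : (∑' n, Complex.log ((z - (nu n : ℂ)) / (z - (lam n : ℂ)))).im =
      ∑' n, ((z - (nu n : ℂ)).arg - (z - (lam n : ℂ)).arg) := by
    rw [Complex.im_tsum hlog]
    simp only [Complex.log_im, arg_div_eq_sub hz]
  refine ⟨Complex.multipliable_of_summable_log hlog, ?_, hS, ?_, hSpos, hSlt⟩
  · rw [← hprod, Complex.exp_im, him]
    exact mul_pos (Real.exp_pos _) (Real.sin_pos_of_pos_of_lt_pi hSpos hSlt)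
  · rw [← hprod, Complex.arg_exp, him, toIocMod_eq_self]
    constructor <;> linarith [Real.pi_pos]
end

section
/- Let (λ_n)_{n∈ℕ} be a strictly increasing sequence of real numbers with λ_n → ∞ and let (ν_n)_{n∈ℕ} be a real sequence with λ_n < ν_n < λ_{n+1} for all n ∈ ℕ and ∑_{n∈ℕ}(ν_n − λ_n) < ∞. Then for every k ∈ ℕ the product defining R_k(ν) converges and lim_{z→λ_k} (z − λ_k)·F_ν(z) = R_k(ν); that is, F_ν has a simple pole at λ_k with residue R_k(ν). -/
/-!
Write each factor as `(z − ν_n)/(z − λ_n) = 1 + (λ_n − ν_n)/(z − λ_n)`. Since `λ` is strictly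
increasing, `λ_k` has positive distance from the other `λ_n` (`exists_gap`), so for `z` in a small
disc around `λ_k` the perturbations with `n ≠ k` are dominated by the summable sequence
`(ν_n − λ_n)/δ` (`norm_perturb_le`). Hence the product over `n ≠ k` converges on that disc and, by
dominated convergence for infinite products, is continuous at `λ_k`. Splitting off the factor
`n = k` cancels the pole:
`(z − λ_k)·F_ν(z) = (z − ν_k)·∏_{n≠k} (z − ν_n)/(z − λ_n)`.
-/


open Filter

/-- The factor `2` leaves room for a disc of radius `δ` around `λ_k` all of whose points keep
distance `δ` from every other `λ_n`. -/
lemma exists_gap {lam : ℕ → ℝ} (hmono : StrictMono lam) (k : ℕ) :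
    ∃ δ : ℝ, 0 < δ ∧ ∀ n, n ≠ k → 2 * δ ≤ |lam k - lam n| := by
  have hr : ∀ n, k < n → lam (k + 1) - lam k ≤ |lam k - lam n| := fun n hn => by
    have := hmono.monotone (Nat.succ_le_of_lt hn)
    rw [abs_sub_comm]
    exact le_trans (by simpa using this) (le_abs_self _)
  have hpos : 0 < lam (k + 1) - lam k := sub_pos.2 (hmono k.lt_succ_self)
  cases k with
  | zero =>
    exact ⟨(lam 1 - lam 0) / 2, by simpa using hpos, fun n hn => by
      have := hr n (Nat.pos_of_ne_zero hn)
      simp only [zero_add] at this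
      linarith⟩
  | succ j =>
    have hpos' : 0 < lam (j + 1) - lam j := sub_pos.2 (hmono j.lt_succ_self)
    refine ⟨min (lam (j + 1 + 1) - lam (j + 1)) (lam (j + 1) - lam j) / 2,
      half_pos (lt_min hpos hpos'), fun n hn => ?_⟩
    rw [mul_div_cancel₀ _ two_ne_zero]
    rcases lt_or_gt_of_ne hn with h | h
    · have := hmono.monotone (Nat.le_of_lt_succ h)
      exact (min_le_right _ _).trans (le_trans (by linarith) (le_abs_self _))
    · exact (min_le_left _ _).trans (hr n h)

lemma le_norm_sub {c a δ : ℝ} {z : ℂ} (hgap : 2 * δ ≤ |c - a|) (hz : ‖z - c‖ < δ) :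
    δ ≤ ‖z - a‖ := by
  have h1 : ‖(c : ℂ) - a‖ = |c - a| := by
    rw [← Complex.ofReal_sub, Complex.norm_real, Real.norm_eq_abs]
  have h2 : ‖(c : ℂ) - a‖ ≤ ‖(c : ℂ) - z‖ + ‖z - a‖ := norm_sub_le_norm_sub_add_norm_sub _ _ _
  rw [norm_sub_rev (c : ℂ) z] at h2
  linarith

lemma norm_perturb_le {c a b δ : ℝ} {z : ℂ} (hδ : 0 < δ) (hab : a < b)
    (hgap : 2 * δ ≤ |c - a|) (hz : ‖z - c‖ < δ) :
    ‖((a : ℂ) - b) / (z - a)‖ ≤ (b - a) / δ := by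
  have h1 : ‖(a : ℂ) - b‖ = b - a := by
    rw [← Complex.ofReal_sub, Complex.norm_real, Real.norm_eq_abs, abs_sub_comm,
      abs_of_pos (sub_pos.2 hab)]
  rw [norm_div, h1]
  exact div_le_div_of_nonneg_left (sub_pos.2 hab).le hδ (le_norm_sub hgap hz)

/-- residue computation used in Theorems 3.3–3.6:
`F_ν` has a simple pole at `λ_k` with residue `R_k(ν)`, i.e.
`(z − λ_k)·F_ν(z) → R_k(ν)` as `z → λ_k` within the domain of `F_ν`. -/
theorem residue_of_F (lam nu : ℕ → ℝ)
    (hmono : StrictMono lam)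
    (htend : Tendsto lam atTop atTop)
    (hintl : ∀ n, lam n < nu n ∧ nu n < lam (n + 1))
    (hsum : Summable fun n => nu n - lam n) :
    ∀ k : ℕ,
      (Multipliable fun n : {n : ℕ // n ≠ k} => (lam k - nu n) / (lam k - lam n)) ∧
      Tendsto (fun z : ℂ => (z - (lam k : ℂ)) * ∏' n, (z - (nu n : ℂ)) / (z - (lam n : ℂ)))
        (nhdsWithin (lam k : ℂ) {z : ℂ | ∀ n, z ≠ (lam n : ℂ)})
        (nhds (Rres lam nu k : ℂ)) := by
  intro k
  obtain ⟨δ, hδ, hgap⟩ := exists_gap hmono k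
  have hbsum : Summable fun n : {n : ℕ // n ≠ k} => (nu n - lam n) / δ :=
    (hsum.div_const δ).subtype {n | n ≠ k}
  have hne : ∀ z : ℂ, ‖z - lam k‖ < δ → ∀ n : {n : ℕ // n ≠ k}, z - (lam n : ℂ) ≠ 0 :=
    fun z hz n => norm_pos_iff.1 (hδ.trans_le (le_norm_sub (hgap n n.2) hz))
  have hfac : ∀ z : ℂ, ‖z - lam k‖ < δ → ∀ n : {n : ℕ // n ≠ k},
      1 + ((lam n : ℂ) - nu n) / (z - lam n) = (z - nu n) / (z - lam n) := fun z hz n => by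
    field_simp [hne z hz n]
    ring
  have hbound : ∀ z : ℂ, ‖z - lam k‖ < δ → ∀ n : {n : ℕ // n ≠ k},
      ‖((lam n : ℂ) - nu n) / (z - lam n)‖ ≤ (nu n - lam n) / δ :=
    fun z hz n => norm_perturb_le hδ (hintl n).1 (hgap n n.2) hz
  have hmult : ∀ z : ℂ, ‖z - lam k‖ < δ →
      Multipliable fun n : {n : ℕ // n ≠ k} => (z - (nu n : ℂ)) / (z - lam n) := fun z hz => by
    simp_rw [← hfac z hz]
    exact multipliable_one_add_of_summable
      (hbsum.of_nonneg_of_le (fun _ => norm_nonneg _) (hbound z hz))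
  have hcenter : ‖(lam k : ℂ) - lam k‖ < δ := by simpa using hδ
  have hreal : Multipliable fun n : {n : ℕ // n ≠ k} => (lam k - nu n) / (lam k - lam n) := by
    have hlam : ∀ n : {n : ℕ // n ≠ k}, lam k - lam n ≠ 0 := fun n =>
      sub_ne_zero.2 fun h => n.2 (hmono.injective h).symm
    have heq : ∀ n : {n : ℕ // n ≠ k},
        (lam k - nu n) / (lam k - lam n) = 1 + (lam n - nu n) / (lam k - lam n) := fun n => by
      field_simp [hlam n]
      ring
    simp_rw [heq]
    refine multipliable_one_add_of_summable
      (hbsum.of_nonneg_of_le (fun _ => norm_nonneg _) fun n => ?_)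
    have := hbound (lam k) hcenter n
    rwa [← Complex.ofReal_sub, ← Complex.ofReal_sub, ← Complex.ofReal_div,
      Complex.norm_real] at this
  refine ⟨hreal, ?_⟩
  have hnear : ∀ᶠ z : ℂ in nhds (lam k : ℂ), ‖z - lam k‖ < δ := by
    filter_upwards [Metric.ball_mem_nhds (lam k : ℂ) hδ] with z hz
    simpa [dist_eq_norm] using hz
  have hprod : Tendsto
      (fun z : ℂ => ∏' n : {n : ℕ // n ≠ k}, (1 + ((lam n : ℂ) - nu n) / (z - lam n)))
      (nhds (lam k : ℂ))
      (nhds (∏' n : {n : ℕ // n ≠ k}, (1 + ((lam n : ℂ) - nu n) / ((lam k : ℂ) - lam n)))) := by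
    refine tendsto_tprod_one_add_of_dominated_convergence hbsum (fun n => ?_)
      (hnear.mono hbound)
    exact tendsto_const_nhds.div (tendsto_id.sub tendsto_const_nhds) (hne _ hcenter n)
  have hR : (Rres lam nu k : ℂ) = ((lam k : ℂ) - nu k) *
      ∏' n : {n : ℕ // n ≠ k}, (1 + ((lam n : ℂ) - nu n) / ((lam k : ℂ) - lam n)) := by
    have hmap := hreal.map_tprod Complex.ofRealHom Complex.continuous_ofReal
    simp only [Complex.ofRealHom_eq_coe] at hmap
    rw [Rres, Complex.ofReal_mul, hmap, Complex.ofReal_sub]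
    congr 1
    refine tprod_congr fun n => ?_
    rw [hfac _ hcenter n]
    push_cast
    rfl
  rw [hR]
  refine (((tendsto_id.sub tendsto_const_nhds).mul hprod).mono_left
    nhdsWithin_le_nhds).congr' ?_
  filter_upwards [self_mem_nhdsWithin, hnear.filter_mono nhdsWithin_le_nhds] with z hz hzδ
  have hk : z - (lam k : ℂ) ≠ 0 := sub_ne_zero.2 (hz k)
  -- Splitting `ℕ` as `{k}ᶜ ∪ {k}`; the subtype of `{k}ᶜ` is definitionally `{n // n ≠ k}`.
  have hsplit : HasProd (fun n => (z - (nu n : ℂ)) / (z - lam n))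
      ((∏' n : {n : ℕ // n ≠ k}, (z - (nu n : ℂ)) / (z - lam n)) *
        ((z - nu k) / (z - lam k))) :=
    HasProd.compl_mul (s := {k}) (hmult z hzδ).hasProd
      (hasProd_unique (fun n : ({k} : Set ℕ) => (z - (nu n : ℂ)) / (z - lam n)))
  rw [hsplit.tprod_eq, tprod_congr (hfac z hzδ)]
  simp only [id]
  field_simp
end
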